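/- arXiv:1401.7498 — 2 statements merged into one kernel-verified Lean document; each statement's English description precedes it below -/
import Mathlib

section
/- Let E₁, …, E_m be nontrivial word equations on n unknowns such that Sol_{n−1}(E₁) ⊋ Sol_{n−1}(E₁, E₂) ⊋ ⋯ ⊋ Sol_{n−1}(E₁, …, E_m) ≠ ∅, where Sol_{n−1} denotes the set of common solutions of rank n − 1. Then there exist two unknowns x, y ∈ Ξ such that m ≤ (|E₁|_x + |E₁|_y)² + 1. -/
open Polynomial

/-- The characteristic polynomial `P(w)` of a word. -/
noncomputable def wordPoly (w : List ℕ) : Polynomial ℤ :=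
  ∑ i ∈ Finset.range w.length, Polynomial.C (w.getD i 0 : ℤ) * Polynomial.X ^ i

/-- Application of a morphism (given by the images of the unknowns) to a word. -/
def mApply {n : ℕ} {β : Type*} (h : Fin n → List β) (w : List (Fin n)) : List β :=
  (w.map h).flatten

/-- The morphism maps every unknown to a word over the alphabet `A`. -/
def IntoAlph {n : ℕ} (A : Finset ℕ) (h : Fin n → List ℕ) : Prop :=
  ∀ i, ∀ a ∈ h i, a ∈ A

/-- `w` is a product of words from `A`. -/
def InStar (A : Finset (List ℕ)) (w : List ℕ) : Prop :=
  ∃ l : List (List ℕ), (∀ u ∈ l, u ∈ A) ∧ l.flatten = w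

/-- The combinatorial rank of a morphism: the smallest `r` such that there is a set of
`r` words whose products contain all images of the unknowns. -/
noncomputable def mRank {n : ℕ} (h : Fin n → List ℕ) : ℕ :=
  sInf {r | ∃ A : Finset (List ℕ), A.card = r ∧ ∀ i, InStar A (h i)}

/-- The length type of a morphism, as a rational vector. -/
def lenQ {n : ℕ} (h : Fin n → List ℕ) : Fin n → ℚ :=
  fun i => ((h i).length : ℚ)

/-- `|w|_L`: the length of the image of `w` under any morphism of length type `L`. -/
def lenL {n : ℕ} (L : Fin n → ℕ) (w : List (Fin n)) : ℕ :=
  (w.map L).sum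

/-- The polynomial `Q_{E,x,L}` for the word equation `u = v`, the unknown `x` and the
length type `L`. -/
noncomputable def eqPoly {n : ℕ} (u v : List (Fin n)) (x : Fin n) (L : Fin n → ℕ) :
    Polynomial ℤ :=
  (∑ i ∈ Finset.range u.length,
      if u.getD i x = x then (Polynomial.X : Polynomial ℤ) ^ lenL L (u.take i) else 0)
    - ∑ i ∈ Finset.range v.length,
      if v.getD i x = x then (Polynomial.X : Polynomial ℤ) ^ lenL L (v.take i) else 0

/-- Embedding of `ℤ[X]` into the field `ℚ(X)` of rational functions. -/
noncomputable def toRF (p : Polynomial ℤ) : RatFunc ℚ :=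
  algebraMap (Polynomial ℚ) (RatFunc ℚ) (p.map (Int.castRingHom ℚ))

section ChainAux

/-- Fox derivative, evaluated in a commutative ring. -/
def fox {n : ℕ} {R : Type*} [CommRing R] (ξ : Fin n → R) (x : Fin n) : List (Fin n) → R
  | [] => 0
  | a :: w => (if a = x then 1 else 0) + ξ a * fox ξ x w

theorem fox_append {n : ℕ} {R : Type*} [CommRing R] (ξ : Fin n → R) (x : Fin n)
    (s t : List (Fin n)) :
    fox ξ x (s ++ t) = fox ξ x s + (s.map ξ).prod * fox ξ x t := by
  induction s with
  | nil => simp [fox]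
  | cons a s ih => simp only [List.cons_append, fox, ih, List.map_cons, List.prod_cons]; ring

theorem fox_map {n : ℕ} {R S : Type*} [CommRing R] [CommRing S] (f : R →+* S)
    (ξ : Fin n → R) (x : Fin n) (w : List (Fin n)) :
    f (fox ξ x w) = fox (fun a => f (ξ a)) x w := by
  induction w with
  | nil => simp [fox]
  | cons a w ih => simp only [fox, map_add, map_mul, ih]; split_ifs <;> simp

theorem mApply_nil {n : ℕ} {β : Type*} (h : Fin n → List β) : mApply h [] = [] := rfl

theorem mApply_cons {n : ℕ} {β : Type*} (h : Fin n → List β) (a : Fin n) (w : List (Fin n)) :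
    mApply h (a :: w) = h a ++ mApply h w := by simp [mApply]

theorem fox_chain {n k : ℕ} {R : Type*} [CommRing R] (η : Fin k → R) (t : Fin k)
    (α : Fin n → List (Fin k)) (w : List (Fin n)) :
    fox η t (mApply α w)
      = ∑ x, fox (fun x => ((α x).map η).prod) x w * fox η t (α x) := by
  induction w with
  | nil => simp [fox, mApply]
  | cons a w ih =>
    rw [mApply_cons, fox_append, ih]
    simp only [fox, add_mul, Finset.sum_add_distrib, ite_mul, one_mul, zero_mul,
      Finset.sum_ite_eq, Finset.mem_univ, if_true, mul_assoc, Finset.mul_sum]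

/-- Word polynomial over the reals. -/
noncomputable def wp : List ℕ → ℝ[X]
  | [] => 0
  | a :: w => C (a : ℝ) + X * wp w

theorem wp_append (s t : List ℕ) : wp (s ++ t) = wp s + X ^ s.length * wp t := by
  induction s with
  | nil => simp [wp]
  | cons a s ih => simp only [List.cons_append, wp, ih, List.length_cons, pow_succ]; ring

theorem wp_chain {n : ℕ} (g : Fin n → List ℕ) (w : List (Fin n)) :
    wp (mApply g w) = ∑ x, fox (fun x => (X : ℝ[X]) ^ (g x).length) x w * wp (g x) := by
  induction w with
  | nil => simp [fox, mApply, wp]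
  | cons a w ih =>
    rw [mApply_cons, wp_append, ih]
    simp only [fox, add_mul, Finset.sum_add_distrib, ite_mul, one_mul, zero_mul,
      Finset.sum_ite_eq, Finset.mem_univ, if_true, mul_assoc, Finset.mul_sum]

theorem wp_inj : ∀ (s t : List ℕ), (∀ a ∈ s, 0 < a) → (∀ a ∈ t, 0 < a) → wp s = wp t → s = t
  | [], [], _, _, _ => rfl
  | [], b :: t, _, ht, h => by
    exfalso
    have h0 := congrArg (eval 0) h.symm
    simp [wp] at h0
    have := ht b (by simp)
    omega
  | a :: s, [], hs, _, h => by
    exfalso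
    have := congrArg (eval 0) h
    simp [wp] at this
    have := hs a (by simp)
    omega
  | a :: s, b :: t, hs, ht, h => by
    have h0 := congrArg (eval 0) h
    simp [wp] at h0
    subst h0
    simp only [wp, add_right_inj] at h
    have h1 := mul_left_cancel₀ X_ne_zero h
    rw [wp_inj s t (fun a ha => hs a (by simp [ha])) (fun a ha => ht a (by simp [ha])) h1]

/-- The row of an equation. -/
def row {n : ℕ} {R : Type*} [CommRing R] (ξ : Fin n → R) (e : List (Fin n) × List (Fin n))
    (x : Fin n) : R := fox ξ x e.1 - fox ξ x e.2

theorem row_map {n : ℕ} {R S : Type*} [CommRing R] [CommRing S] (f : R →+* S)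
    (ξ : Fin n → R) (e : List (Fin n) × List (Fin n)) (x : Fin n) :
    f (row ξ e x) = row (fun a => f (ξ a)) e x := by
  simp [row, fox_map]

/-- The two-by-two minor. -/
def minor {n : ℕ} {R : Type*} [CommRing R] (ξ : Fin n → R) (e e' : List (Fin n) × List (Fin n))
    (x y : Fin n) : R := row ξ e x * row ξ e' y - row ξ e y * row ξ e' x

theorem minor_map {n : ℕ} {R S : Type*} [CommRing R] [CommRing S] (f : R →+* S)
    (ξ : Fin n → R) (e e' : List (Fin n) × List (Fin n)) (x y : Fin n) :
    f (minor ξ e e' x y) = minor (fun a => f (ξ a)) e e' x y := by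
  simp [minor, row_map]

theorem fox_nonneg {n : ℕ} (ξ : Fin n → ℝ) (hξ : ∀ a, 0 ≤ ξ a) (x : Fin n) (w : List (Fin n)) :
    0 ≤ fox ξ x w := by
  induction w with
  | nil => simp [fox]
  | cons a w ih =>
    have := mul_nonneg (hξ a) ih
    simp only [fox]; split_ifs <;> linarith

theorem row_ne_zero {n : ℕ} (L : Fin n → ℕ) (hL : ∀ x y, x ≠ y → L x ≠ 0 ∨ L y ≠ 0) :
    ∀ (u v : List (Fin n)), u ≠ v →
      ∃ x, fox (fun x => (X : ℝ[X]) ^ L x) x u ≠ fox (fun x => (X : ℝ[X]) ^ L x) x v := by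
  have ev : ∀ x w, eval 0 (fox (fun x => (X : ℝ[X]) ^ L x) x w)
      = fox (fun x => (0 : ℝ) ^ L x) x w := by
    intro x w
    have := fox_map (evalRingHom (0:ℝ)) (fun x => (X : ℝ[X]) ^ L x) x w
    simpa using this
  have hnn : ∀ a, (0:ℝ) ≤ (0 : ℝ) ^ L a := fun a => by positivity
  have h1 : ∀ a w, 1 ≤ fox (fun x => (0 : ℝ) ^ L x) a (a :: w) := by
    intro a w
    have := mul_nonneg (hnn a) (fox_nonneg _ hnn a w)
    simp only [fox, if_true]; linarith
  have h0 : ∀ a b w, b ≠ a → L b ≠ 0 → fox (fun x => (0 : ℝ) ^ L x) a (b :: w) = 0 := by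
    intro a b w hab hb
    simp [fox, hab, hb]
  intro u
  induction u with
  | nil =>
    intro v hv
    cases v with
    | nil => exact absurd rfl hv
    | cons b v =>
      refine ⟨b, fun h => ?_⟩
      have h := congrArg (eval 0) h
      rw [ev, ev] at h
      have := h1 b v
      rw [← h] at this
      simp [fox] at this
      linarith
  | cons a u ih =>
    intro v hv
    cases v with
    | nil =>
      refine ⟨a, fun h => ?_⟩
      have h := congrArg (eval 0) h
      rw [ev, ev] at h
      have := h1 a u
      rw [h] at this
      simp [fox] at this
      linarith
    | cons b v =>
      by_cases hab : a = b
      · subst hab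
        obtain ⟨x, hx⟩ := ih v (fun h => hv (by rw [h]))
        refine ⟨x, fun h => hx ?_⟩
        simp only [fox, add_right_inj] at h
        exact mul_left_cancel₀ (pow_ne_zero _ X_ne_zero) h
      · rcases hL a b hab with h | h
        · refine ⟨b, fun h' => ?_⟩
          have h' := congrArg (eval 0) h'
          rw [ev, ev, h0 b a u hab h] at h'
          have := h1 b v
          linarith
        · refine ⟨a, fun h' => ?_⟩
          have h' := congrArg (eval 0) h'
          rw [ev, ev, h0 a b v (Ne.symm hab) h] at h'
          have := h1 a u
          linarith

theorem transfer {n : ℕ} (g : Fin n → List ℕ) (hpos : ∀ i, ∀ a ∈ g i, 0 < a)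
    (hL : ∀ x y, x ≠ y → (g x).length ≠ 0 ∨ (g y).length ≠ 0)
    (e e' : List (Fin n) × List (Fin n)) (hne : e.1 ≠ e.2)
    (he : mApply g e.1 = mApply g e.2)
    (hmin : ∀ x y, minor (fun x => (X : ℝ[X]) ^ (g x).length) e e' x y = 0) :
    mApply g e'.1 = mApply g e'.2 := by
  have hp : ∀ w : List (Fin n), ∀ a ∈ mApply g w, 0 < a := by
    intro w a ha
    simp only [mApply, List.mem_flatten, List.mem_map] at ha
    obtain ⟨l, ⟨i, _, rfl⟩, ha⟩ := ha
    exact hpos i a ha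
  apply wp_inj _ _ (hp _) (hp _)
  obtain ⟨y, hy⟩ := row_ne_zero (fun x => (g x).length) hL e.1 e.2 hne
  set ξ : Fin n → ℝ[X] := fun x => (X : ℝ[X]) ^ (g x).length with hξ
  have hrowy : row ξ e y ≠ 0 := sub_ne_zero.mpr hy
  have h1 : ∑ x, row ξ e x * wp (g x) = 0 := by
    simp only [row, sub_mul, Finset.sum_sub_distrib]
    rw [hξ, ← wp_chain, ← wp_chain, he, sub_self]
  have h2 : ∑ x, row ξ e' x * wp (g x) = wp (mApply g e'.1) - wp (mApply g e'.2) := by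
    simp only [row, sub_mul, Finset.sum_sub_distrib]
    rw [hξ, ← wp_chain, ← wp_chain]
  rw [← sub_eq_zero, ← h2]
  have h3 : row ξ e y * ∑ x, row ξ e' x * wp (g x) = 0 := by
    have : row ξ e y * ∑ x, row ξ e' x * wp (g x) = row ξ e' y * ∑ x, row ξ e x * wp (g x) := by
      rw [Finset.mul_sum, Finset.mul_sum]
      refine Finset.sum_congr rfl fun x _ => ?_
      have := hmin x y
      simp only [minor] at this
      linear_combination (-wp (g x)) * this
    rw [this, h1, mul_zero]
  exact (mul_eq_zero.mp h3).resolve_left hrowy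

/-- Full rank of the occurrence matrix. -/
def FullRk {n k : ℕ} (α : Fin n → List (Fin k)) : Prop :=
  ∀ c : Fin k → ℚ, (∀ x, ((α x).map c).sum = 0) → c = 0

theorem mApply_comp {n k : ℕ} {β : Type*} (θ : Fin k → List β) (α : Fin n → List (Fin k))
    (w : List (Fin n)) : mApply θ (mApply α w) = mApply (fun x => mApply θ (α x)) w := by
  induction w with
  | nil => rfl
  | cons a w ih =>
    rw [mApply_cons, mApply_cons, ← ih]
    simp [mApply]

theorem factor_insert {k : ℕ} {β : Type*} (h : Fin (k+1) → List β) (a : Fin (k+1))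
    (w : List (Fin k)) (hw : h a = mApply (fun t => h (a.succAbove t)) w) :
    ∃ (α : Fin (k+1) → List (Fin k)) (θ : Fin k → List β),
      (∀ x, h x = mApply θ (α x)) ∧ FullRk α := by
  refine ⟨a.insertNth (α := fun _ => List (Fin k)) w (fun t => [t]),
    fun t => h (a.succAbove t), ?_, ?_⟩
  · intro x
    refine Fin.succAboveCases a ?_ ?_ x
    · simpa using hw
    · intro t; simp [mApply]
  · intro c hc
    funext t
    simpa using hc (a.succAbove t)

theorem factor {k : ℕ} {β : Type*} : ∀ (N : ℕ) (h : Fin (k+1) → List β),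
    ∑ x, (h x).length ≤ N → ∀ (u v : List (Fin (k+1))), u ≠ v → mApply h u = mApply h v →
    ∃ (α : Fin (k+1) → List (Fin k)) (θ : Fin k → List β),
      (∀ x, h x = mApply θ (α x)) ∧ FullRk α := by
  intro N
  induction N using Nat.strong_induction_on with
  | _ N IH =>
  intro h hN
  -- the main elementary step
  have step : ∀ (a b : Fin (k+1)) (u v : List (Fin (k+1))), a ≠ b → h b ≠ [] →
      (h b).length ≤ (h a).length → mApply h (a :: u) = mApply h (b :: v) →
      ∃ (α : Fin (k+1) → List (Fin k)) (θ : Fin k → List β),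
        (∀ x, h x = mApply θ (α x)) ∧ FullRk α := by
    intro a b u v hab hb hle heq
    rw [mApply_cons, mApply_cons] at heq
    have hpre : h b <+: h a :=
      List.prefix_of_prefix_length_le (List.prefix_append (h b) (mApply h v))
        (heq ▸ List.prefix_append (h a) (mApply h u)) hle
    obtain ⟨s, hs⟩ := hpre
    rcases eq_or_ne s [] with rfl | hsn
    · obtain ⟨t, rfl⟩ := Fin.exists_succAbove_eq (Ne.symm hab)
      exact factor_insert h a [t] (by simpa [mApply] using hs.symm)
    · let h' : Fin (k+1) → List β := Function.update h a s
      let φ : Fin (k+1) → List (Fin (k+1)) := Function.update (fun z => [z]) a [b, a]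
      have hφa : φ a = [b, a] := by simp [φ]
      have hφz : ∀ z, z ≠ a → φ z = [z] := fun z hz => by simp [φ, hz]
      have hh'a : h' a = s := by simp [h']
      have hh'z : ∀ z, z ≠ a → h' z = h z := fun z hz => by simp [h', hz]
      have hcomp : ∀ z, mApply h' (φ z) = h z := by
        intro z
        by_cases hz : z = a
        · subst hz
          rw [hφa]
          simp [mApply, hh'a, hh'z b (Ne.symm hab), hs]
        · rw [hφz z hz]; simp [mApply, hh'z z hz]
      have hsum : ∑ x, (h' x).length < ∑ x, (h x).length := by
        apply Finset.sum_lt_sum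
        · intro x _
          by_cases hx : x = a
          · subst hx; rw [hh'a, ← hs]; simp
          · rw [hh'z x hx]
        · refine ⟨a, Finset.mem_univ _, ?_⟩
          rw [hh'a, ← hs]
          have := List.length_pos_iff.mpr hb
          simp; omega
      have hne : mApply φ (a :: u) ≠ mApply φ (b :: v) := by
        rw [mApply_cons, mApply_cons, hφa, hφz b (Ne.symm hab)]
        intro h
        simp only [List.cons_append, List.nil_append, List.cons.injEq, true_and] at h
        cases v with
        | nil => simp [mApply] at h
        | cons z v =>
          rw [mApply_cons] at h
          by_cases hz : z = a
          · subst hz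
            rw [hφa] at h
            simp at h
            exact hab h.1
          · rw [hφz z hz] at h
            simp at h
            exact hz h.1.symm
      have hfun : (fun x => mApply h' (φ x)) = h := funext hcomp
      obtain ⟨α', θ, hα', hr⟩ := IH (∑ x, (h' x).length) (lt_of_lt_of_le hsum hN) h' le_rfl
        _ _ hne (by rw [mApply_comp, mApply_comp, hfun, mApply_cons, mApply_cons, heq])
      refine ⟨fun x => mApply α' (φ x), θ, ?_, ?_⟩
      · intro x
        rw [mApply_comp, ← hcomp x]
        congr 1
        funext z
        exact hα' z
      · intro c hc
        apply hr
        have hz : ∀ z, z ≠ a → ((α' z).map c).sum = 0 := by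
          intro z hz
          have := hc z
          beta_reduce at this
          rw [hφz z hz] at this
          simpa [mApply] using this
        intro x
        by_cases hx : x = a
        · subst hx
          have := hc x
          beta_reduce at this
          rw [hφa] at this
          simp [mApply, hz b (Ne.symm hab)] at this
          exact this
        · exact hz x hx
  intro u
  induction u with
  | nil =>
    intro v hv he
    cases v with
    | nil => exact absurd rfl hv
    | cons b v =>
      rw [mApply_cons, mApply_nil] at he
      exact factor_insert h b [] (by simpa [mApply] using (List.append_eq_nil_iff.mp he.symm).1)
  | cons a u ih =>
    intro v hv he
    cases v with
    | nil =>
      rw [mApply_cons, mApply_nil] at he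
      exact factor_insert h a [] (by simpa [mApply] using (List.append_eq_nil_iff.mp he).1)
    | cons b v =>
      by_cases hab : a = b
      · subst hab
        rw [mApply_cons, mApply_cons, List.append_cancel_left_eq] at he
        exact ih v (fun h => hv (by rw [h])) he
      · by_cases ha : h a = []
        · exact factor_insert h a [] (by simpa [mApply] using ha)
        by_cases hb : h b = []
        · exact factor_insert h b [] (by simpa [mApply] using hb)
        rcases le_total (h b).length (h a).length with hle | hle
        · exact step a b u v hab hb hle he
        · exact step b a v u (Ne.symm hab) ha hle he.symm

theorem mRank_le {n k : ℕ} (h : Fin n → List ℕ) (α : Fin n → List (Fin k))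
    (θ : Fin k → List ℕ) (hθ : ∀ x, h x = mApply θ (α x)) : mRank h ≤ k := by
  classical
  refine le_trans (Nat.sInf_le (m := (Finset.univ.image θ).card)
    ⟨Finset.univ.image θ, rfl, ?_⟩) (by simpa using Finset.card_image_le (s := Finset.univ) (f := θ))
  intro x
  refine ⟨(α x).map θ, by simp, ?_⟩
  rw [hθ x]; rfl

/-- A rank `k` solution on `k+1` unknowns factors. -/
theorem factor_rank {k : ℕ} (h : Fin (k+1) → List ℕ) (hr : mRank h = k)
    (u v : List (Fin (k+1))) (huv : u ≠ v) (he : mApply h u = mApply h v) :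
    ∃ α : Fin (k+1) → List (Fin k), FullRk α ∧
      (∃ θ : Fin k → List ℕ, ∀ x, h x = mApply θ (α x)) ∧
      ∀ u' v', mApply h u' = mApply h v' → mApply α u' = mApply α v' := by
  obtain ⟨α, θ, hα, hf⟩ := factor _ h le_rfl u v huv he
  refine ⟨α, hf, ⟨θ, hα⟩, fun u' v' h' => ?_⟩
  by_contra hne
  have hh : h = fun x => mApply θ (α x) := funext hα
  rw [hh, ← mApply_comp, ← mApply_comp] at h'
  cases k with
  | zero =>
    apply hne
    have : ∀ l : List (Fin 0), l = [] := by
      intro l; cases l with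
      | nil => rfl
      | cons a _ => exact a.elim0
    rw [this (mApply α u'), this (mApply α v')]
  | succ k =>
    obtain ⟨β, τ, hβ, _⟩ := factor _ θ le_rfl _ _ hne h'
    have := mRank_le h (fun x => mApply β (α x)) τ (by
      intro x
      rw [mApply_comp, hα x]
      congr 1
      funext t; exact hβ t)
    omega

theorem rank_zero_len {k : ℕ} (h : Fin (k+1) → List ℕ) (hr : mRank h = k) :
    ∀ x y, x ≠ y → (h x).length ≠ 0 ∨ (h y).length ≠ 0 := by
  classical
  intro x y hxy
  by_contra hcon
  push Not at hcon
  have hx : h x = [] := List.length_eq_zero_iff.mp hcon.1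
  have hy : h y = [] := List.length_eq_zero_iff.mp hcon.2
  have hle : mRank h ≤ (((Finset.univ.erase x).erase y).image h).card := by
    refine Nat.sInf_le ⟨_, rfl, fun i => ?_⟩
    by_cases hi : h i = []
    · exact ⟨[], by simp, by simp [hi]⟩
    · refine ⟨[h i], ?_, by simp⟩
      intro u hu
      simp only [List.mem_singleton] at hu
      subst hu
      refine Finset.mem_image_of_mem _ ?_
      simp only [Finset.mem_erase, Finset.mem_univ, and_true]
      exact ⟨fun h' => hi (h' ▸ hy), fun h' => hi (h' ▸ hx)⟩
  have h2 := Finset.card_image_le (s := (Finset.univ.erase x).erase y) (f := h)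
  rw [Finset.card_erase_of_mem (by simp [Ne.symm hxy]), Finset.card_erase_of_mem (by simp)] at h2
  simp at h2
  have : 2 ≤ k + 1 := by
    by_contra hk
    have : k = 0 := by omega
    subst this
    exact hxy (Fin.ext (by omega))
  omega

/-- Product of `ξ` over a word is the monomial. -/
noncomputable def ab {k : ℕ} (w : List (Fin k)) : Fin k →₀ ℕ :=
  (w.map (fun t => Finsupp.single t 1)).sum

/-- Additive extension. -/
noncomputable def gs {n : ℕ} {M : Type*} [AddCommMonoid M] (c : Fin n → M) : (Fin n →₀ ℕ) →+ M :=
  Finsupp.liftAddHom (fun a => multiplesHom M (c a))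

theorem gs_single {n : ℕ} {M : Type*} [AddCommMonoid M] (c : Fin n → M) (a : Fin n) (j : ℕ) :
    gs c (Finsupp.single a j) = j • c a := by
  simp [gs]

theorem gs_ab {k : ℕ} {M : Type*} [AddCommMonoid M] (c : Fin k → M) (w : List (Fin k)) :
    gs c (ab w) = (w.map c).sum := by
  induction w with
  | nil => simp [ab]
  | cons a w ih =>
    have : ab (a :: w) = Finsupp.single a 1 + ab w := by simp [ab]
    rw [this, map_add, ih, gs_single]; simp

theorem gs_gs {n k : ℕ} {M : Type*} [AddCommMonoid M] (c : Fin k → M) (b : Fin n → (Fin k →₀ ℕ))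
    (f : Fin n →₀ ℕ) : gs c (gs b f) = gs (fun x => gs c (b x)) f := by
  induction f using Finsupp.induction_linear with
  | zero => simp
  | add f g hf hg => simp only [map_add, hf, hg]
  | single a j => simp only [gs_single, map_nsmul]

/-- Evaluation of a monomial. -/
noncomputable def mon {n : ℕ} {R : Type*} [CommRing R] (ξ : Fin n → R) (f : Fin n →₀ ℕ) : R :=
  f.prod fun a j => ξ a ^ j

theorem mon_zero {n : ℕ} {R : Type*} [CommRing R] (ξ : Fin n → R) : mon ξ 0 = 1 := by
  simp [mon]

theorem mon_add {n : ℕ} {R : Type*} [CommRing R] (ξ : Fin n → R) (f g : Fin n →₀ ℕ) :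
    mon ξ (f + g) = mon ξ f * mon ξ g := by
  simp only [mon]
  exact Finsupp.prod_add_index' (by simp) (by intros; exact pow_add _ _ _)

theorem mon_single {n : ℕ} {R : Type*} [CommRing R] (ξ : Fin n → R) (a : Fin n) (j : ℕ) :
    mon ξ (Finsupp.single a j) = ξ a ^ j := by
  simp [mon]

theorem mon_monomial {n k : ℕ} (b : Fin n → (Fin k →₀ ℕ)) (f : Fin n →₀ ℕ) :
    mon (fun x => MvPolynomial.monomial (b x) (1 : ℚ)) f = MvPolynomial.monomial (gs b f) 1 := by
  induction f using Finsupp.induction_linear with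
  | zero => simp [mon_zero]
  | add f g hf hg => rw [mon_add, hf, hg, map_add, MvPolynomial.monomial_mul, one_mul]
  | single a j => rw [mon_single, gs_single, MvPolynomial.monomial_pow, one_pow]

theorem prod_X {k : ℕ} (w : List (Fin k)) :
    (w.map (fun t => (MvPolynomial.X t : MvPolynomial (Fin k) ℚ))).prod
      = MvPolynomial.monomial (ab w) 1 := by
  induction w with
  | nil => simp [ab]
  | cons a w ih =>
    have : ab (a :: w) = Finsupp.single a 1 + ab w := by simp [ab]
    rw [this, List.map_cons, List.prod_cons, ih, MvPolynomial.X, MvPolynomial.monomial_mul, one_mul]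

/-- Exponents of the positions of `x`. -/
noncomputable def pos {n : ℕ} (x : Fin n) : List (Fin n) → List (Fin n →₀ ℕ)
  | [] => []
  | a :: w => (if a = x then [0] else []) ++ (pos x w).map (fun q => Finsupp.single a 1 + q)

theorem pos_length {n : ℕ} (x : Fin n) (w : List (Fin n)) : (pos x w).length = w.count x := by
  induction w with
  | nil => simp [pos]
  | cons a w ih =>
    simp only [pos, List.length_append, List.length_map, ih, List.count_cons]
    split_ifs <;> (simp_all; try omega)

theorem pos_sorted {n : ℕ} (x : Fin n) (w : List (Fin n)) : (pos x w).Pairwise (· ≤ ·) := by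
  induction w with
  | nil => simp [pos]
  | cons a w ih =>
    simp only [pos]
    rw [List.pairwise_append]
    refine ⟨by split_ifs <;> simp, ?_, ?_⟩
    · rw [List.pairwise_map]
      exact ih.imp (fun h => by gcongr)
    · intro p hp q _
      split_ifs at hp
      · simp at hp; subst hp; exact zero_le
      · simp at hp

/-- Sum of monomials. -/
noncomputable def evl {n : ℕ} {R : Type*} [CommRing R] (ξ : Fin n → R) (l : List (Fin n →₀ ℕ)) : R :=
  (l.map (mon ξ)).sum

theorem evl_append {n : ℕ} {R : Type*} [CommRing R] (ξ : Fin n → R) (l l' : List (Fin n →₀ ℕ)) :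
    evl ξ (l ++ l') = evl ξ l + evl ξ l' := by simp [evl]

theorem evl_shift {n : ℕ} {R : Type*} [CommRing R] (ξ : Fin n → R) (e : Fin n →₀ ℕ)
    (l : List (Fin n →₀ ℕ)) :
    evl ξ (l.map (fun q => e + q)) = mon ξ e * evl ξ l := by
  induction l with
  | nil => simp [evl]
  | cons a l ih =>
    simp only [evl, List.map_cons, List.sum_cons, mon_add] at ih ⊢
    rw [ih]; ring

theorem fox_eq_evl {n : ℕ} {R : Type*} [CommRing R] (ξ : Fin n → R) (x : Fin n)
    (w : List (Fin n)) : fox ξ x w = evl ξ (pos x w) := by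
  induction w with
  | nil => simp [fox, pos, evl]
  | cons a w ih =>
    rw [pos, evl_append, evl_shift, mon_single, pow_one, ← ih, fox]
    congr 1
    split_ifs <;> simp [evl, mon_zero]

/-- Blocks of chains: pairs (positive chain, negative chain). -/
noncomputable def blk {n : ℕ} (P C C' : List (Fin n →₀ ℕ)) :
    List (List (Fin n →₀ ℕ) × List (Fin n →₀ ℕ)) :=
  P.map (fun e => (C.map (fun q => e + q), C'.map (fun q => e + q)))

theorem evl_blk {n : ℕ} {R : Type*} [CommRing R] (ξ : Fin n → R) (P C C' : List (Fin n →₀ ℕ)) :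
    evl ξ ((blk P C C').flatMap Prod.fst) = evl ξ P * evl ξ C ∧
    evl ξ ((blk P C C').flatMap Prod.snd) = evl ξ P * evl ξ C' := by
  induction P with
  | nil => simp [blk, evl]
  | cons e P ih =>
    have h : evl ξ (e :: P) = mon ξ e + evl ξ P := by simp [evl]
    have h2 : blk (e :: P) C C' = (C.map (fun q => e + q), C'.map (fun q => e + q)) :: blk P C C' :=
      rfl
    rw [h, h2, List.flatMap_cons, List.flatMap_cons, evl_append, evl_append, ih.1, ih.2]
    constructor
    · rw [evl_shift]; ring
    · rw [evl_shift]; ring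

/-- All chains of the minor. -/
noncomputable def chains {n : ℕ} (e e' : List (Fin n) × List (Fin n)) (x y : Fin n) :
    List (List (Fin n →₀ ℕ) × List (Fin n →₀ ℕ)) :=
  blk (pos x e.1) (pos y e'.1) (pos y e'.2) ++ blk (pos x e.2) (pos y e'.2) (pos y e'.1) ++
  (blk (pos y e.1) (pos x e'.2) (pos x e'.1) ++ blk (pos y e.2) (pos x e'.1) (pos x e'.2))

theorem chains_length {n : ℕ} (e e' : List (Fin n) × List (Fin n)) (x y : Fin n) :
    (chains e e' x y).length = (e.1 ++ e.2).count x + (e.1 ++ e.2).count y := by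
  simp [chains, blk, pos_length]; omega

theorem minor_eq {n : ℕ} {R : Type*} [CommRing R] (ξ : Fin n → R)
    (e e' : List (Fin n) × List (Fin n)) (x y : Fin n) :
    minor ξ e e' x y = evl ξ ((chains e e' x y).flatMap Prod.fst)
      - evl ξ ((chains e e' x y).flatMap Prod.snd) := by
  simp only [chains, List.flatMap_append, evl_append, evl_blk, minor, row, fox_eq_evl]
  ring

theorem chains_sorted {n : ℕ} (e e' : List (Fin n) × List (Fin n)) (x y : Fin n) :
    ∀ p ∈ chains e e' x y, p.1.Pairwise (· ≤ ·) ∧ p.2.Pairwise (· ≤ ·) := by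
  have key : ∀ (P C C' : List (Fin n →₀ ℕ)), C.Pairwise (· ≤ ·) → C'.Pairwise (· ≤ ·) →
      ∀ p ∈ blk P C C', p.1.Pairwise (· ≤ ·) ∧ p.2.Pairwise (· ≤ ·) := by
    intro P C C' hC hC' p hp
    simp only [blk, List.mem_map] at hp
    obtain ⟨e, _, rfl⟩ := hp
    simp only [List.pairwise_map]
    exact ⟨hC.imp (fun h => by gcongr), hC'.imp (fun h => by gcongr)⟩
  intro p hp
  simp only [chains, List.mem_append] at hp
  rcases hp with (hp | hp) | (hp | hp) <;>
    exact key _ _ _ (pos_sorted _ _) (pos_sorted _ _) p hp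

theorem find_min {E : Type*} [PartialOrder E] (l : List E) (hl : l.Pairwise (· ≤ ·)) (p : E → Bool)
    (f : E) (hf : f ∈ l) (hp : p f = true) : ∃ f0, l.find? p = some f0 ∧ p f0 = true ∧ f0 ≤ f := by
  induction l with
  | nil => simp at hf
  | cons a l ih =>
    by_cases ha : p a = true
    · refine ⟨a, by simp [ha], ha, ?_⟩
      rcases List.mem_cons.mp hf with rfl | h
      · exact le_rfl
      · exact (List.pairwise_cons.mp hl).1 f h
    · rcases List.mem_cons.mp hf with rfl | h
      · exact absurd hp ha
      · obtain ⟨f0, h0, h1, h2⟩ := ih (List.pairwise_cons.mp hl).2 h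
        exact ⟨f0, by simp [ha, h0], h1, h2⟩

theorem coeff_evl {n k : ℕ} (b : Fin n → (Fin k →₀ ℕ)) (l : List (Fin n →₀ ℕ)) (d : Fin k →₀ ℕ) :
    MvPolynomial.coeff d (evl (fun x => MvPolynomial.monomial (b x) (1 : ℚ)) l)
      = ((l.map (gs b)).count d : ℕ) := by
  classical
  induction l with
  | nil => simp [evl]
  | cons a l ih =>
    have h : ∀ {R : Type} [CommRing R] (ξ : Fin n → R), evl ξ (a :: l) = mon ξ a + evl ξ l := by
      intros; simp [evl]
    rw [h, MvPolynomial.coeff_add, ih, mon_monomial, MvPolynomial.coeff_monomial, List.map_cons,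
      List.count_cons]
    by_cases hh : gs b a = d
    · simp [hh, add_comm]
    · simp [hh]

/-- Cancellation argument. -/
theorem cancel_min {n k : ℕ} (F : List (List (Fin n →₀ ℕ) × List (Fin n →₀ ℕ)))
    (hs : ∀ p ∈ F, p.1.Pairwise (· ≤ ·) ∧ p.2.Pairwise (· ≤ ·))
    (hne : (↑(F.flatMap Prod.fst) : Multiset (Fin n →₀ ℕ)) ≠ ↑(F.flatMap Prod.snd)) :
    ∃ s t : Fin F.length → Option (Fin n →₀ ℕ), ∀ b : Fin n → (Fin k →₀ ℕ),
      Multiset.map (gs b) ↑(F.flatMap Prod.fst) = Multiset.map (gs b) ↑(F.flatMap Prod.snd) →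
      ∃ i j f g, s i = some f ∧ t j = some g ∧ f ≠ g ∧ gs b f = gs b g := by
  classical
  set P : Multiset (Fin n →₀ ℕ) := ↑(F.flatMap Prod.fst) with hP
  set N : Multiset (Fin n →₀ ℕ) := ↑(F.flatMap Prod.snd) with hN
  refine ⟨fun i => (F.get i).1.find? (fun f => decide (f ∈ P - N)),
    fun i => (F.get i).2.find? (fun f => decide (f ∈ N - P)), fun b hb => ?_⟩
  have hmap : (P - N).map (gs b) = (N - P).map (gs b) := by
    have h1 : P - N + P ∩ N = P := Multiset.sub_add_inter P N
    have h2 : N - P + P ∩ N = N := by rw [Multiset.inter_comm]; exact Multiset.sub_add_inter N P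
    have : (P - N).map (gs b) + (P ∩ N).map (gs b) = (N - P).map (gs b) + (P ∩ N).map (gs b) := by
      rw [← Multiset.map_add, ← Multiset.map_add, h1, h2, hb]
    exact add_right_cancel this
  have hne0 : P - N ≠ 0 := by
    intro h0
    have h0' : N - P = 0 := by
      rw [h0] at hmap
      simpa using hmap.symm
    exact hne (le_antisymm (tsub_eq_zero_iff_le.mp h0) (tsub_eq_zero_iff_le.mp h0'))
  have hmono : ∀ f g : Fin n →₀ ℕ, f ≤ g → toLex (gs b f) ≤ toLex (gs b g) := by
    intro f g hfg
    apply Finsupp.toLex_monotone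
    obtain ⟨d, rfl⟩ := exists_add_of_le hfg
    rw [map_add]
    exact le_self_add
  obtain ⟨f, hf, hfmin⟩ := Finset.exists_min_image (P - N).toFinset (fun f => toLex (gs b f))
    (by simpa using hne0)
  simp only [Multiset.mem_toFinset] at hf hfmin
  have hgm : gs b f ∈ (N - P).map (gs b) := by
    rw [← hmap]; exact Multiset.mem_map_of_mem _ hf
  obtain ⟨g, hg, hgf⟩ := Multiset.mem_map.mp hgm
  have hgmin : ∀ g' ∈ N - P, toLex (gs b f) ≤ toLex (gs b g') := by
    intro g' hg'
    have : gs b g' ∈ (P - N).map (gs b) := by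
      rw [hmap]; exact Multiset.mem_map_of_mem _ hg'
    obtain ⟨f', hf', he⟩ := Multiset.mem_map.mp this
    rw [← he]; exact hfmin f' hf'
  have hfP : f ∈ F.flatMap Prod.fst := by
    have := Multiset.mem_of_le (tsub_le_self) hf
    simpa [hP] using this
  have hgN : g ∈ F.flatMap Prod.snd := by
    have := Multiset.mem_of_le (tsub_le_self) hg
    simpa [hN] using this
  obtain ⟨p, hp, hfp⟩ := List.mem_flatMap.mp hfP
  obtain ⟨q, hq, hgq⟩ := List.mem_flatMap.mp hgN
  obtain ⟨i, rfl⟩ := List.mem_iff_get.mp hp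
  obtain ⟨j, rfl⟩ := List.mem_iff_get.mp hq
  obtain ⟨f0, hf0, hf0m, hf0l⟩ := find_min _ (hs _ hp).1 (fun f => decide (f ∈ P - N)) f hfp
    (by simpa using hf)
  obtain ⟨g0, hg0, hg0m, hg0l⟩ := find_min _ (hs _ hq).2 (fun f => decide (f ∈ N - P)) g hgq
    (by simpa using hg)
  simp only [decide_eq_true_eq] at hf0m hg0m
  refine ⟨i, j, f0, g0, hf0, hg0, ?_, ?_⟩
  · rintro rfl
    have h1 := Multiset.count_pos.mpr hf0m
    have h2 := Multiset.count_pos.mpr hg0m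
    rw [Multiset.count_sub] at h1 h2
    omega
  · have e1 : toLex (gs b f0) = toLex (gs b f) := le_antisymm (hmono _ _ hf0l) (hfmin _ hf0m)
    have e2 : toLex (gs b g0) = toLex (gs b f) :=
      le_antisymm (by rw [← hgf]; exact hmono _ _ hg0l) (hgmin _ hg0m)
    exact toLex.injective (e1.trans e2.symm)

theorem fox_one_count {k : ℕ} (t : Fin k) (w : List (Fin k)) :
    fox (fun _ => (1 : ℚ)) t w = w.count t := by
  induction w with
  | nil => simp [fox]
  | cons a w ih =>
    rw [fox, ih, List.count_cons]
    by_cases h : a = t <;> simp [h, add_comm]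

theorem sum_count {k : ℕ} (c : Fin k → ℚ) (w : List (Fin k)) :
    ∑ t, (w.count t : ℚ) * c t = (w.map c).sum := by
  induction w with
  | nil => simp
  | cons a w ih =>
    simp only [List.count_cons, Nat.cast_add, add_mul, Finset.sum_add_distrib, ih, List.map_cons,
      List.sum_cons]
    simp [add_comm]

/-- The formal identity along a principal solution. -/
theorem minor_alpha {k : ℕ} (α : Fin (k+1) → List (Fin k)) (hα : FullRk α)
    (e e' : List (Fin (k+1)) × List (Fin (k+1)))
    (he : mApply α e.1 = mApply α e.2) (he' : mApply α e'.1 = mApply α e'.2) (x y : Fin (k+1)) :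
    minor (fun x => MvPolynomial.monomial (ab (α x)) (1 : ℚ)) e e' x y = 0 := by
  classical
  let R := MvPolynomial (Fin k) ℚ
  let K := FractionRing R
  let η : Fin k → R := fun t => MvPolynomial.X t
  let ξ : Fin (k+1) → R := fun x => MvPolynomial.monomial (ab (α x)) (1 : ℚ)
  have hξ : (fun x => ((α x).map η).prod) = ξ := funext fun x => prod_X (α x)
  let M : Matrix (Fin (k+1)) (Fin k) R := fun x t => fox η t (α x)
  have hker : ∀ e : List (Fin (k+1)) × List (Fin (k+1)), mApply α e.1 = mApply α e.2 →
      ∀ t, ∑ x, row ξ e x * M x t = 0 := by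
    intro e he t
    have h1 := fox_chain η t α e.1
    have h2 := fox_chain η t α e.2
    rw [hξ] at h1 h2
    simp only [row, sub_mul, Finset.sum_sub_distrib, M]
    rw [← h1, ← h2, he, sub_self]
  -- specialisation
  let N : Matrix (Fin (k+1)) (Fin k) ℚ := fun x t => ((α x).count t : ℚ)
  have hN : ∀ c : Fin k → ℚ, N.mulVec c = 0 → c = 0 := by
    intro c hc
    apply hα
    intro x
    have := congrFun hc x
    rw [← sum_count]
    exact this
  have hdetN : (N.transpose * N).det ≠ 0 := by
    intro h0
    obtain ⟨v, hv, hv0⟩ := Matrix.exists_mulVec_eq_zero_iff.mpr h0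
    apply hv
    apply hN
    have h1 : v ∈ LinearMap.ker (N.transpose * N).mulVecLin := by
      rw [LinearMap.mem_ker, Matrix.mulVecLin_apply]; exact hv0
    rw [Matrix.ker_mulVecLin_transpose_mul_self, LinearMap.mem_ker, Matrix.mulVecLin_apply] at h1
    exact h1
  let f : R →+* ℚ := (MvPolynomial.aeval (R := ℚ) (fun _ : Fin k => (1 : ℚ))).toRingHom
  have hMN : M.map f = N := by
    ext x t
    change f (fox η t (α x)) = ((α x).count t : ℚ)
    rw [fox_map, ← fox_one_count]
    congr 1
    funext t
    simp only [f, η]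
    exact MvPolynomial.aeval_X _ _
  have hdetM : (M.transpose * M).det ≠ 0 := by
    intro h0
    apply hdetN
    have := congrArg f h0
    rw [RingHom.map_det, map_zero, RingHom.mapMatrix_apply, Matrix.map_mul, Matrix.transpose_map,
      hMN] at this
    exact this
  let ι : R →+* K := algebraMap R K
  have hι : Function.Injective ι := IsFractionRing.injective R K
  let MK : Matrix (Fin (k+1)) (Fin k) K := M.map ι
  have hdetK : (MK.transpose * MK).det ≠ 0 := by
    have : (MK.transpose * MK).det = ι (M.transpose * M).det := by
      rw [RingHom.map_det, RingHom.mapMatrix_apply, Matrix.map_mul, ← Matrix.transpose_map]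
    rw [this]
    exact fun h => hdetM (hι (by rw [h, map_zero]))
  have hrk : k ≤ MK.transpose.rank := by
    have h1 : (MK.transpose * MK).rank = k := by
      have hu : IsUnit (MK.transpose * MK) :=
        (Matrix.isUnit_iff_isUnit_det _).mpr (isUnit_iff_ne_zero.mpr hdetK)
      rw [Matrix.rank_of_isUnit _ hu]; simp
    calc k = (MK.transpose * MK).rank := h1.symm
      _ ≤ _ := Matrix.rank_mul_le_left _ _
  have hkd : Module.finrank K (LinearMap.ker MK.transpose.mulVecLin) ≤ 1 := by
    have h1 := LinearMap.finrank_range_add_finrank_ker MK.transpose.mulVecLin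
    rw [Matrix.rank] at hrk
    simp only [Module.finrank_fintype_fun_eq_card, Fintype.card_fin] at h1
    omega
  obtain ⟨v, hv⟩ := finrank_le_one_iff.mp hkd
  have hmem : ∀ e : List (Fin (k+1)) × List (Fin (k+1)), mApply α e.1 = mApply α e.2 →
      (fun x => ι (row ξ e x)) ∈ LinearMap.ker MK.transpose.mulVecLin := by
    intro e he
    rw [LinearMap.mem_ker, Matrix.mulVecLin_apply]
    funext t
    have := congrArg ι (hker e he t)
    rw [map_sum, map_zero] at this
    simp only [Matrix.mulVec, dotProduct, Matrix.transpose_apply, MK, Matrix.map_apply,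
      Pi.zero_apply]
    rw [← this]
    exact Finset.sum_congr rfl fun x _ => by rw [map_mul, mul_comm]
  obtain ⟨c, hc⟩ := hv ⟨_, hmem e he⟩
  obtain ⟨c', hc'⟩ := hv ⟨_, hmem e' he'⟩
  have h1 : ∀ z, ι (row ξ e z) = c * v.1 z := fun z =>
    (congrFun (congrArg Subtype.val hc) z).symm
  have h2 : ∀ z, ι (row ξ e' z) = c' * v.1 z := fun z =>
    (congrFun (congrArg Subtype.val hc') z).symm
  apply hι
  change ι (row ξ e x * row ξ e' y - row ξ e y * row ξ e' x) = ι 0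
  rw [map_sub, map_mul, map_mul, h1, h1, h2, h2, map_zero]
  ring

theorem minor_len {k : ℕ} (α : Fin (k+1) → List (Fin k)) (L : Fin (k+1) → ℕ) (c : Fin k → ℚ)
    (hL : ∀ x, ((α x).map c).sum = (L x : ℚ))
    (e e' : List (Fin (k+1)) × List (Fin (k+1))) (x y : Fin (k+1))
    (h : minor (fun x => MvPolynomial.monomial (ab (α x)) (1 : ℚ)) e e' x y = 0) :
    minor (fun x => (X : ℝ[X]) ^ L x) e e' x y = 0 := by
  apply Polynomial.eq_zero_of_infinite_isRoot
  refine Set.Infinite.mono ?_ (Set.Ioi_infinite (0 : ℝ))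
  intro r hr
  have hr : 0 < r := hr
  change eval r _ = 0
  have h1 := minor_map (evalRingHom r) (fun x => (X : ℝ[X]) ^ L x) e e' x y
  have h2 := minor_map (MvPolynomial.aeval (R := ℚ) (fun t : Fin k => r ^ ((c t : ℚ) : ℝ))).toRingHom
    (fun x => MvPolynomial.monomial (ab (α x)) (1 : ℚ)) e e' x y
  rw [h, map_zero] at h2
  rw [coe_evalRingHom] at h1
  rw [h1, h2]
  congr 1
  funext z
  have h3 : ∀ w : List (Fin k),
      (MvPolynomial.aeval (R := ℚ) (fun t : Fin k => r ^ ((c t : ℚ) : ℝ)))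
        (MvPolynomial.monomial (ab w) (1 : ℚ)) = r ^ (((w.map c).sum : ℚ) : ℝ) := by
    intro w
    rw [← prod_X, map_list_prod, List.map_map]
    induction w with
    | nil => simp
    | cons a w ih =>
      rw [List.map_cons, List.prod_cons, ih, List.map_cons, List.sum_cons, Rat.cast_add,
        Real.rpow_add hr]
      simp
  have h4 := h3 (α z)
  rw [hL z] at h4
  simp only [eval_pow, eval_X]
  refine Eq.trans ?_ h4.symm
  rw [Rat.cast_natCast, Real.rpow_natCast]

/-- Length types as a linear map. -/
def lenMap {k : ℕ} (α : Fin (k+1) → List (Fin k)) : (Fin k → ℚ) →ₗ[ℚ] (Fin (k+1) → ℚ) where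
  toFun c := fun x => ((α x).map c).sum
  map_add' c d := by
    funext x
    simp only [Pi.add_apply]
    exact List.sum_map_add
  map_smul' r c := by
    funext x
    simp only [Pi.smul_apply, smul_eq_mul, RingHom.id_apply]
    exact List.sum_map_mul_left _ _ _

theorem range_eq {k : ℕ} (α : Fin (k+1) → List (Fin k)) (hα : FullRk α)
    (f g : Fin (k+1) →₀ ℕ) (hfg : f ≠ g)
    (h : gs (fun x => ab (α x)) f = gs (fun x => ab (α x)) g) (L : Fin (k+1) → ℚ) :
    (∃ c, lenMap α c = L) ↔ gs L f = gs L g := by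
  have hgs : ∀ (L : Fin (k+1) → ℚ) (f : Fin (k+1) →₀ ℕ), gs L f = ∑ x, (f x : ℚ) * L x := by
    intro L f
    simp [gs, Finsupp.sum_fintype]
  let d : Module.Dual ℚ (Fin (k+1) → ℚ) :=
    ∑ x, ((f x : ℚ) - g x) • LinearMap.proj x
  have hd : ∀ L, d L = gs L f - gs L g := by
    intro L
    simp [d, hgs, sub_mul, Finset.sum_sub_distrib]
  have hd0 : d ≠ 0 := by
    intro h0
    apply hfg
    ext x
    have := LinearMap.congr_fun h0 (Pi.single x 1)
    rw [hd, hgs, hgs] at this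
    simp [Pi.single_apply, sub_eq_zero] at this
    exact this
  have hle : LinearMap.range (lenMap α) ≤ LinearMap.ker d := by
    rintro _ ⟨c, rfl⟩
    rw [LinearMap.mem_ker, hd, sub_eq_zero]
    have h1 : lenMap α c = fun x => gs c (ab (α x)) := by
      funext x; rw [gs_ab]; rfl
    rw [h1, ← gs_gs, ← gs_gs, h]
  have hinj : Function.Injective (lenMap α) := by
    rw [injective_iff_map_eq_zero]
    intro c hc
    exact hα c (fun x => congrFun hc x)
  have heq : LinearMap.range (lenMap α) = LinearMap.ker d := by
    apply Submodule.eq_of_le_of_finrank_eq hle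
    rw [LinearMap.finrank_range_of_inj hinj]
    have := Module.Dual.finrank_ker_add_one_of_ne_zero hd0
    simp at this ⊢
    omega
  have h1 : (∃ c, lenMap α c = L) ↔ L ∈ LinearMap.range (lenMap α) := Iff.rfl
  rw [h1, heq, LinearMap.mem_ker, hd, sub_eq_zero]

end ChainAux

/-- Let `E₁, …, E_m` be nontrivial equations on `n` unknowns with
`Sol_{n−1}(E₁) ⊋ Sol_{n−1}(E₁,E₂) ⊋ ⋯ ⊋ Sol_{n−1}(E₁,…,E_m) ≠ ∅`. Then there are two
unknowns `x, y` such that `m ≤ (|E₁|_x + |E₁|_y)² + 1`. -/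
theorem chain_length_quadratic_bound {n m : ℕ}
    (A : Finset ℕ) (hA : ∀ a ∈ A, 0 < a)
    (hm : 0 < m)
    (eqs : Fin m → List (Fin n) × List (Fin n))
    (hnt : ∀ i, (eqs i).1 ≠ (eqs i).2)
    (hchain : ∀ k : ℕ, 1 ≤ k → k < m →
      {h : Fin n → List ℕ | IntoAlph A h ∧ mRank h = n - 1 ∧
          ∀ i : Fin m, (i : ℕ) < k + 1 → mApply h (eqs i).1 = mApply h (eqs i).2}
        ⊂ {h : Fin n → List ℕ | IntoAlph A h ∧ mRank h = n - 1 ∧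
            ∀ i : Fin m, (i : ℕ) < k → mApply h (eqs i).1 = mApply h (eqs i).2})
    (hne : {h : Fin n → List ℕ | IntoAlph A h ∧ mRank h = n - 1 ∧
        ∀ i : Fin m, mApply h (eqs i).1 = mApply h (eqs i).2}.Nonempty) :
    ∃ x y : Fin n,
      m ≤ (((eqs ⟨0, hm⟩).1 ++ (eqs ⟨0, hm⟩).2).count x
            + ((eqs ⟨0, hm⟩).1 ++ (eqs ⟨0, hm⟩).2).count y) ^ 2 + 1 := by
  rcases n with _ | k
  · exfalso
    have hnil : ∀ l : List (Fin 0), l = [] := by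
      intro l; cases l with
      | nil => rfl
      | cons a _ => exact a.elim0
    exact hnt ⟨0, hm⟩ ((hnil _).trans (hnil _).symm)
  simp only [Nat.add_sub_cancel] at hchain hne
  by_cases hm1 : m = 1
  · exact ⟨0, 0, hm1.le.trans (Nat.le_add_left _ _)⟩
  have hm2 : 2 ≤ m := by omega
  set E1 := eqs ⟨0, hm⟩ with hE1
  -- the witnesses: `g j` solves the first `j` equations, not the next one
  have hwit : ∀ j : ℕ, ∃ g : Fin (k+1) → List ℕ, 1 ≤ j → j ≤ m →
      IntoAlph A g ∧ mRank g = k ∧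
        (∀ i : Fin m, (i : ℕ) < j → mApply g (eqs i).1 = mApply g (eqs i).2) ∧
        ∀ hj : j < m, mApply g (eqs ⟨j, hj⟩).1 ≠ mApply g (eqs ⟨j, hj⟩).2 := by
    intro j
    by_cases h1 : 1 ≤ j
    swap
    · exact ⟨fun _ => [], fun h => absurd h h1⟩
    by_cases h2 : j < m
    · obtain ⟨g, hg, hg'⟩ := Set.exists_of_ssubset (hchain j h1 h2)
      refine ⟨g, fun _ _ => ⟨hg.1, hg.2.1, hg.2.2, fun hj h => hg' ⟨hg.1, hg.2.1, ?_⟩⟩⟩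
      intro i hi
      rcases Nat.lt_succ_iff_lt_or_eq.mp hi with hi | hi
      · exact hg.2.2 i hi
      · have : i = ⟨j, hj⟩ := Fin.ext hi
        rw [this]; exact h
    · obtain ⟨g, hg⟩ := hne
      exact ⟨g, fun _ _ => ⟨hg.1, hg.2.1, fun i _ => hg.2.2 i, fun hj => absurd hj h2⟩⟩
  choose g hg using hwit
  have hpos : ∀ j, 1 ≤ j → j ≤ m → ∀ i, ∀ a ∈ g j i, 0 < a :=
    fun j h1 h2 i a ha => hA a ((hg j h1 h2).1 i a ha)
  have hE1sol : ∀ j, 1 ≤ j → j ≤ m → mApply (g j) E1.1 = mApply (g j) E1.2 :=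
    fun j h1 h2 => (hg j h1 h2).2.2.1 ⟨0, hm⟩ h1
  -- a failing formal minor
  set E2 := eqs ⟨1, hm2⟩ with hE2
  have hxy : ∃ x y, minor (fun x => (MvPolynomial.X x : MvPolynomial (Fin (k+1)) ℚ)) E1 E2 x y
      ≠ 0 := by
    by_contra hcon
    push Not at hcon
    refine (hg 1 le_rfl hm).2.2.2 hm2 (transfer (g 1) (hpos 1 le_rfl hm)
      (rank_zero_len _ (hg 1 le_rfl hm).2.1) E1 E2 (hnt _) (hE1sol 1 le_rfl hm) fun x y => ?_)
    have := minor_map (MvPolynomial.aeval (R := ℚ)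
      (fun x => (X : ℝ[X]) ^ (g 1 x).length)).toRingHom
      (fun x => (MvPolynomial.X x : MvPolynomial (Fin (k+1)) ℚ)) E1 E2 x y
    rw [hcon x y, map_zero] at this
    simpa using this.symm
  obtain ⟨x, y, hxy⟩ := hxy
  refine ⟨x, y, ?_⟩
  rw [← chains_length E1 E2 x y]
  set F := chains E1 E2 x y with hF
  have hPN : (↑((chains E1 E2 x y).flatMap Prod.fst) : Multiset (Fin (k+1) →₀ ℕ))
      ≠ ↑((chains E1 E2 x y).flatMap Prod.snd) := by
    intro h
    apply hxy
    rw [minor_eq, sub_eq_zero]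
    exact ((Multiset.coe_eq_coe.mp h).map _).sum_eq
  obtain ⟨s, t, hst⟩ := cancel_min (k := k) (chains E1 E2 x y) (chains_sorted E1 E2 x y) hPN
  -- the factorization of each witness
  have hfac : ∀ j : Fin (m - 1), ∃ α : Fin (k+1) → List (Fin k), FullRk α ∧
      (∃ θ : Fin k → List ℕ, ∀ x, g (j + 2) x = mApply θ (α x)) ∧
      ∀ u' v', mApply (g (j + 2)) u' = mApply (g (j + 2)) v' → mApply α u' = mApply α v' := by
    intro j
    have h1 : 1 ≤ (j : ℕ) + 2 := by omega
    have h2 : (j : ℕ) + 2 ≤ m := by omega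
    exact factor_rank _ (hg _ h1 h2).2.1 E1.1 E1.2 (hnt _) (hE1sol _ h1 h2)
  choose α hα hθ hαs using hfac
  have hij : ∀ j : Fin (m - 1), ∃ p : Fin F.length × Fin F.length, ∃ f f',
      s p.1 = some f ∧ t p.2 = some f' ∧ f ≠ f' ∧
        gs (fun x => ab (α j x)) f = gs (fun x => ab (α j x)) f' := by
    intro j
    have h1 : 1 ≤ (j : ℕ) + 2 := by omega
    have h2 : (j : ℕ) + 2 ≤ m := by omega
    have hmin := minor_alpha (α j) (hα j) E1 E2 (hαs j _ _ (hE1sol _ h1 h2))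
      (hαs j _ _ ((hg _ h1 h2).2.2.1 ⟨1, hm2⟩ (by simp))) x y
    rw [minor_eq, sub_eq_zero, ← hF] at hmin
    obtain ⟨i, i', f, f', h⟩ := hst (fun x => ab (α j x)) (by
      rw [Multiset.map_coe, Multiset.map_coe, Multiset.coe_eq_coe]
      classical
      rw [List.perm_iff_count]
      intro d
      have := congrArg (MvPolynomial.coeff d) hmin
      rw [coeff_evl, coeff_evl] at this
      exact_mod_cast this)
    exact ⟨(i, i'), f, f', h⟩
  choose p hp using hij
  by_contra hcon
  have hcard : Fintype.card (Fin F.length × Fin F.length) < Fintype.card (Fin (m - 1)) := by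
    simp only [Fintype.card_prod, Fintype.card_fin]
    rw [← sq]; omega
  obtain ⟨a, b, hab, hpab⟩ := Fintype.exists_ne_map_eq_of_card_lt p hcard
  have key : ∀ a b : Fin (m - 1), (a : ℕ) < b → p a = p b → False := by
    intro a b hab hpab
    obtain ⟨f, f', h1, h2, h3, h4⟩ := hp a
    obtain ⟨f₂, f₂', h1', h2', h3', h4'⟩ := hp b
    rw [← hpab, h1] at h1'
    rw [← hpab, h2] at h2'
    obtain rfl := Option.some.inj h1'
    obtain rfl := Option.some.inj h2'
    have ha1 : 1 ≤ (a : ℕ) + 2 := by omega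
    have ha2 : (a : ℕ) + 2 ≤ m := by omega
    have ha3 : (a : ℕ) + 2 < m := by omega
    have hb1 : 1 ≤ (b : ℕ) + 2 := by omega
    have hb2 : (b : ℕ) + 2 ≤ m := by omega
    obtain ⟨θ, hθa⟩ := hθ a
    have hlen : ∃ c, lenMap (α a) c = fun x => ((g (a + 2) x).length : ℚ) := by
      refine ⟨fun t => ((θ t).length : ℚ), ?_⟩
      funext x
      rw [hθa x]
      simp only [lenMap, mApply, LinearMap.coe_mk, AddHom.coe_mk]
      induction α a x with
      | nil => simp
      | cons z w ih => simp [ih]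
    rw [range_eq (α a) (hα a) f f' h3 h4, ← range_eq (α b) (hα b) f f' h3 h4'] at hlen
    obtain ⟨c, hc⟩ := hlen
    refine (hg _ ha1 ha2).2.2.2 ha3 (transfer (g (a + 2)) (hpos _ ha1 ha2)
      (rank_zero_len _ (hg _ ha1 ha2).2.1) E1 _ (hnt _) (hE1sol _ ha1 ha2) fun x y => ?_)
    refine minor_len (α b) _ c (fun x => congrFun hc x) _ _ x y
      (minor_alpha (α b) (hα b) _ _ (hαs b _ _ (hE1sol _ hb1 hb2)) (hαs b _ _ ?_) x y)
    exact (hg _ hb1 hb2).2.2.1 _ (by simp; omega)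
  rcases lt_or_gt_of_ne (fun h => hab (Fin.ext h)) with h | h
  · exact key a b h hpab
  · exact key b a h hpab.symm
end

section
/- Let E₁, …, E_m be an independent system of word equations on three unknowns that has a nonperiodic common solution. Then there exist two unknowns x, y ∈ Ξ such that m ≤ (|E₁|_x + |E₁|_y)² + 1. -/
open Polynomial

namespace WordEq

open MvPolynomial

/-! Morphisms of words -/

theorem mApply_nil {n : ℕ} {β : Type*} (h : Fin n → List β) : mApply h [] = [] := rfl

theorem mApply_cons {n : ℕ} {β : Type*} (h : Fin n → List β) (c : Fin n) (w : List (Fin n)) :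
    mApply h (c :: w) = h c ++ mApply h w := by simp [mApply]

theorem mApply_append {n : ℕ} {β : Type*} (h : Fin n → List β) (p q : List (Fin n)) :
    mApply h (p ++ q) = mApply h p ++ mApply h q := by simp [mApply]

theorem mApply_comp {n k : ℕ} {β : Type*} (th : Fin k → List β) (et : Fin n → List (Fin k))
    (h : Fin n → List β) (hh : ∀ s, h s = mApply th (et s)) (w : List (Fin n)) :
    mApply h w = mApply th (mApply et w) := by
  induction w with
  | nil => rfl
  | cons c w ih => rw [mApply_cons, mApply_cons, mApply_append, ih, hh]

/-- Cancelling the common prefix of a nontrivial relation of a nonerasing morphism. -/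
theorem cancel_common {n : ℕ} {β : Type*} (h : Fin n → List β) (hne : ∀ c, h c ≠ [])
    (u v : List (Fin n)) (huv : u ≠ v) (he : mApply h u = mApply h v) :
    ∃ s t u' v', s ≠ t ∧ mApply h (s :: u') = mApply h (t :: v') := by
  induction u generalizing v with
  | nil =>
    cases v with
    | nil => exact absurd rfl huv
    | cons t v =>
      rw [mApply_nil, mApply_cons] at he
      exact absurd (List.append_eq_nil_iff.1 he.symm).1 (hne t)
  | cons s u ih =>
    cases v with
    | nil =>
      rw [mApply_nil, mApply_cons] at he
      exact absurd (List.append_eq_nil_iff.1 he).1 (hne s)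
    | cons t v =>
      by_cases hst : s = t
      · subst hst
        rw [mApply_cons, mApply_cons] at he
        exact ih v (fun h => huv (by rw [h])) (List.append_cancel_left he)
      · exact ⟨s, t, u, v, hst, he⟩

/-- The elementary substitution `t ↦ st`. -/
def elemSub {n : ℕ} (s t : Fin n) : Fin n → List (Fin n) :=
  fun c => if c = t then [s, t] else [c]

theorem mApply_elemSub {n : ℕ} {β : Type*} (h : Fin n → List β) (s t : Fin n) (hst : s ≠ t)
    (w : List β) (hw : h t = h s ++ w) (p : List (Fin n)) :
    mApply (Function.update h t w) (mApply (elemSub s t) p) = mApply h p := by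
  symm
  apply mApply_comp
  intro c
  by_cases hc : c = t
  · subst hc
    simp [elemSub, mApply, hw, Function.update_of_ne hst]
  · simp [elemSub, mApply, hc]

theorem head_elemSub {n : ℕ} (s t : Fin n) (hst : s ≠ t) (p q : List (Fin n)) :
    mApply (elemSub s t) p ≠ t :: q := by
  cases p with
  | nil => simp [mApply]
  | cons c p =>
    by_cases hc : c = t
    · subst hc
      simp [mApply, elemSub, hst]
    · simp [mApply, elemSub, hc]

theorem descent_aux {n : ℕ} {β : Type*} (h : Fin n → List β)
    (s t : Fin n) (u v : List (Fin n)) (hst : s ≠ t)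
    (he : mApply h (s :: u) = mApply h (t :: v)) (w : List β) (hw : h t = h s ++ w) :
    ∃ u2 v2, u2 ≠ v2 ∧
      mApply (Function.update h t w) u2 = mApply (Function.update h t w) v2 := by
  refine ⟨mApply (elemSub s t) u, t :: mApply (elemSub s t) v, head_elemSub s t hst _ _, ?_⟩
  rw [mApply_cons, mApply_elemSub h s t hst w hw, mApply_elemSub h s t hst w hw]
  rw [mApply_cons, mApply_cons, hw, List.append_assoc] at he
  simpa using List.append_cancel_left he

/-- One descent step for a nontrivial relation of a nonerasing morphism. -/
theorem descent {n : ℕ} {β : Type*} (h : Fin n → List β) (hne : ∀ c, h c ≠ [])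
    (u v : List (Fin n)) (huv : u ≠ v) (he : mApply h u = mApply h v) :
    ∃ s t w, s ≠ t ∧ h t = h s ++ w ∧ ∃ u2 v2, u2 ≠ v2 ∧
      mApply (Function.update h t w) u2 = mApply (Function.update h t w) v2 := by
  obtain ⟨s, t, u', v', hst, he'⟩ := cancel_common h hne u v huv he
  have h2 := he'
  rw [mApply_cons, mApply_cons] at h2
  rcases List.append_eq_append_iff.1 h2 with ⟨w, hw, _⟩ | ⟨w, hw, _⟩
  · exact ⟨s, t, w, hst, hw, descent_aux h s t u' v' hst he' w hw⟩
  · exact ⟨t, s, w, hst.symm, hw, descent_aux h t s v' u' hst.symm he'.symm w hw⟩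

theorem sum_length_update {n : ℕ} {β : Type*} (h : Fin n → List β) (hne : ∀ c, h c ≠ [])
    (s t : Fin n) (w : List β) (hw : h t = h s ++ w) :
    ∑ c, (Function.update h t w c).length < ∑ c, (h c).length := by
  apply Finset.sum_lt_sum
  · intro c _
    by_cases hc : c = t
    · subst hc; simp [hw]
    · simp [Function.update_of_ne hc]
  · refine ⟨t, Finset.mem_univ _, ?_⟩
    have := List.length_pos_iff.2 (hne s)
    simp [hw]; omega

/-- Two words satisfying a nontrivial relation commute. -/
theorem commute_of_relation {β : Type*} (N : ℕ) (th : Fin 2 → List β)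
    (hN : ∑ c, (th c).length ≤ N) (u v : List (Fin 2)) (huv : u ≠ v)
    (he : mApply th u = mApply th v) : th 0 ++ th 1 = th 1 ++ th 0 := by
  induction N using Nat.strong_induction_on generalizing th u v with
  | _ N ih =>
    by_cases hne : ∀ c, th c ≠ []
    · obtain ⟨s, t, w, hst, hw, u2, v2, h2, he2⟩ := descent th hne u v huv he
      have hlt := sum_length_update th hne s t w hw
      have := ih _ (lt_of_lt_of_le hlt hN) (Function.update th t w) le_rfl u2 v2 h2 he2
      fin_cases s <;> fin_cases t <;> simp_all
      rw [← List.append_assoc, this, List.append_assoc]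
    · push Not at hne
      obtain ⟨c, hc⟩ := hne
      fin_cases c <;> simp_all

theorem injective_of_not_commute {β : Type*} (th : Fin 2 → List β)
    (hc : th 0 ++ th 1 ≠ th 1 ++ th 0) (u v : List (Fin 2))
    (he : mApply th u = mApply th v) : u = v := by
  by_contra huv
  exact hc (commute_of_relation _ th le_rfl u v huv he)

/-- The letter counts of the images are linearly independent. -/
def Indep (et : Fin 3 → List (Fin 2)) : Prop :=
  ∀ p q : ℤ, (∀ c, p * ((et c).count 0 : ℤ) + q * ((et c).count 1 : ℤ) = 0) → p = 0 ∧ q = 0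

/-- A solution of a nontrivial equation on three unknowns factors through two words. -/
theorem factorization {β : Type*} (N : ℕ) (h : Fin 3 → List β)
    (hN : ∑ c, (h c).length ≤ N) (u v : List (Fin 3)) (huv : u ≠ v)
    (he : mApply h u = mApply h v) :
    ∃ (et : Fin 3 → List (Fin 2)) (th : Fin 2 → List β),
      (∀ s, h s = mApply th (et s)) ∧ Indep et := by
  induction N using Nat.strong_induction_on generalizing h u v with
  | _ N ih =>
    by_cases hne : ∀ c, h c ≠ []
    · obtain ⟨s, t, w, hst, hw, u2, v2, h2, he2⟩ := descent h hne u v huv he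
      have hlt := sum_length_update h hne s t w hw
      obtain ⟨et, th, hf, hi⟩ :=
        ih _ (lt_of_lt_of_le hlt hN) (Function.update h t w) le_rfl u2 v2 h2 he2
      refine ⟨Function.update et t (et s ++ et t), th, ?_, ?_⟩
      · intro c
        by_cases hc : c = t
        · subst hc
          have h1 := hf s
          have h3 := hf c
          rw [Function.update_of_ne hst] at h1
          rw [Function.update_self] at h3
          rw [Function.update_self, mApply_append, ← h1, ← h3, hw]
        · have h3 := hf c
          rw [Function.update_of_ne hc] at h3
          rw [Function.update_of_ne hc, h3]
      · intro p q hpq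
        apply hi p q
        intro c
        by_cases hc : c = t
        · subst hc
          have h1 := hpq s
          have h3 := hpq c
          rw [Function.update_of_ne hst] at h1
          rw [Function.update_self, List.count_append, List.count_append] at h3
          push_cast at h3
          linarith
        · have h3 := hpq c
          rw [Function.update_of_ne hc] at h3
          exact h3
    · push Not at hne
      obtain ⟨c, hc⟩ := hne
      fin_cases c
      · refine ⟨![[], [0], [1]], ![h 1, h 2], ?_, ?_⟩
        · intro s; fin_cases s <;> simp_all [mApply]
        · intro p q hpq
          have h1 := hpq 1
          have h2 := hpq 2
          simp at h1 h2
          exact ⟨h1, h2⟩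
      · refine ⟨![[0], [], [1]], ![h 0, h 2], ?_, ?_⟩
        · intro s; fin_cases s <;> simp_all [mApply]
        · intro p q hpq
          have h1 := hpq 0
          have h2 := hpq 2
          simp at h1 h2
          exact ⟨h1, h2⟩
      · refine ⟨![[0], [1], []], ![h 0, h 1], ?_, ?_⟩
        · intro s; fin_cases s <;> simp_all [mApply]
        · intro p q hpq
          have h1 := hpq 0
          have h2 := hpq 1
          simp at h1 h2
          exact ⟨h1, h2⟩

/-- Commuting words are powers of a common word. -/
theorem common_root {β : Type*} (N : ℕ) (a b : List β) (hN : a.length + b.length ≤ N)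
    (hab : a ++ b = b ++ a) :
    ∃ (r : List β) (i j : ℕ), a = (List.replicate i r).flatten ∧
      b = (List.replicate j r).flatten := by
  induction N using Nat.strong_induction_on generalizing a b with
  | _ N ih =>
    by_cases ha : a = []
    · exact ⟨b, 0, 1, by simp [ha], by simp⟩
    by_cases hb : b = []
    · exact ⟨a, 1, 0, by simp, by simp [hb]⟩
    have hla := List.length_pos_iff.2 ha
    have hlb := List.length_pos_iff.2 hb
    rcases List.append_eq_append_iff.1 hab with ⟨w, hw, hw2⟩ | ⟨w, hw, hw2⟩
    · subst hw
      have hc : a ++ w = w ++ a := hw2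
      obtain ⟨r, i, j, h1, h2⟩ := ih (a.length + w.length)
        (by simp at hN; omega) a w le_rfl hc
      refine ⟨r, i, i + j, h1, ?_⟩
      rw [List.replicate_add, List.flatten_append, ← h1, ← h2]
    · subst hw
      have hc : b ++ w = w ++ b := by
        simp only [List.append_assoc] at hab
        exact (List.append_cancel_left hab).symm
      obtain ⟨r, i, j, h1, h2⟩ := ih (b.length + w.length)
        (by simp at hN; omega) b w le_rfl hc
      refine ⟨r, i + j, i, ?_, h1⟩
      rw [List.replicate_add, List.flatten_append, ← h1, ← h2]

theorem mApply_root {k : ℕ} {β : Type*} (th : Fin k → List β) (r : List β) (e : Fin k → ℕ)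
    (hr : ∀ c, th c = (List.replicate (e c) r).flatten) (p : List (Fin k)) :
    ∃ N, mApply th p = (List.replicate N r).flatten := by
  induction p with
  | nil => exact ⟨0, rfl⟩
  | cons c p ih =>
    obtain ⟨N, hN⟩ := ih
    refine ⟨e c + N, ?_⟩
    rw [mApply_cons, hN, hr, List.replicate_add, List.flatten_append]

theorem eq_of_length_eq {β : Type*} (th : Fin 2 → List β)
    (hc : th 0 ++ th 1 = th 1 ++ th 0) (p q : List (Fin 2))
    (hl : (mApply th p).length = (mApply th q).length) : mApply th p = mApply th q := by
  obtain ⟨r, i, j, h1, h2⟩ := common_root _ _ _ le_rfl hc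
  have hr : ∀ c, th c = (List.replicate (![i, j] c) r).flatten := by
    intro c; fin_cases c <;> simp [h1, h2]
  obtain ⟨N, hN⟩ := mApply_root th r _ hr p
  obtain ⟨M, hM⟩ := mApply_root th r _ hr q
  rw [hN, hM] at hl ⊢
  simp at hl
  rcases hl with hl | hl
  · rw [hl]
  · simp [hl]

theorem length_mApply {n : ℕ} {β : Type*} (h : Fin n → List β) (w : List (Fin n)) :
    (mApply h w).length = ∑ c, w.count c * (h c).length := by
  induction w with
  | nil => simp [mApply]
  | cons a w ih =>
    rw [mApply_cons, List.length_append, ih]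
    simp [List.count_cons, add_mul, Finset.sum_add_distrib, add_comm]

end WordEq

namespace WordEq

open MvPolynomial

/-! Fox derivatives -/

/-- The `s`-th Fox derivative of a word, evaluated in a commutative ring. -/
def fox {n : ℕ} {R : Type*} [CommRing R] (q : Fin n → R) (s : Fin n) : List (Fin n) → R
  | [] => 0
  | c :: w => (if c = s then 1 else 0) + q c * fox q s w

theorem fox_append {n : ℕ} {R : Type*} [CommRing R] (q : Fin n → R) (s : Fin n)
    (u v : List (Fin n)) : fox q s (u ++ v) = fox q s u + (u.map q).prod * fox q s v := by
  induction u with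
  | nil => simp [fox]
  | cons c u ih => simp only [List.cons_append, fox, ih, List.map_cons, List.prod_cons]; ring

theorem map_fox {n : ℕ} {R S : Type*} [CommRing R] [CommRing S] (f : R →+* S)
    (q : Fin n → R) (s : Fin n) (w : List (Fin n)) :
    f (fox q s w) = fox (fun c => f (q c)) s w := by
  induction w with
  | nil => simp [fox]
  | cons c w ih => simp only [fox, map_add, map_mul, ih]; split_ifs <;> simp

theorem fox_one {n : ℕ} (s : Fin n) (w : List (Fin n)) :
    fox (fun _ => (1 : ℤ)) s w = (w.count s : ℤ) := by
  induction w with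
  | nil => simp [fox]
  | cons c w ih =>
    rw [fox, ih, List.count_cons]
    by_cases h : c = s
    · simp [h]; ring
    · simp [h]

/-- The chain rule for Fox derivatives. -/
theorem fox_chain {n k : ℕ} {R : Type*} [CommRing R] (q : Fin k → R) (et : Fin n → List (Fin k))
    (a : Fin k) (w : List (Fin n)) :
    fox q a (mApply et w) = ∑ s, fox (fun c => ((et c).map q).prod) s w * fox q a (et s) := by
  induction w with
  | nil => simp [fox, mApply]
  | cons c w ih =>
    rw [mApply_cons, fox_append, ih]
    simp only [fox, add_mul, Finset.sum_add_distrib, Finset.mul_sum, mul_assoc]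
    simp

/-- A word is determined by its Fox derivatives. -/
theorem fox_inj {n : ℕ} {R : Type*} [CommRing R] [IsDomain R] (ep : R →+* ℤ) (q : Fin n → R)
    (hq : ∀ c, ep (q c) = 0) (hq0 : ∀ c, q c ≠ 0) (u v : List (Fin n))
    (h : ∀ s, fox q s u = fox q s v) : u = v := by
  induction u generalizing v with
  | nil =>
    cases v with
    | nil => rfl
    | cons c v =>
      have := congrArg ep (h c)
      simp [fox, hq] at this
  | cons c u ih =>
    cases v with
    | nil =>
      have := congrArg ep (h c)
      simp [fox, hq] at this
    | cons d v =>
      have hcd : d = c := by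
        have := congrArg ep (h c)
        by_contra hne
        simp [fox, hq, hne] at this
      subst hcd
      congr 1
      apply ih
      intro s
      have := h s
      simp only [fox] at this
      exact mul_left_cancel₀ (hq0 d) (add_left_cancel this)

/-! Linear algebra in three dimensions -/

theorem par_aux {R : Type*} [CommRing R] (A B r : Fin 3 → R)
    (hA : ∑ c, r c * A c = 0) (hB : ∑ c, r c * B c = 0) :
    ∀ i j : Fin 3,
      r i * (A (j + 1) * B (j + 2) - A (j + 2) * B (j + 1))
        = r j * (A (i + 1) * B (i + 2) - A (i + 2) * B (i + 1)) := by
  simp only [Fin.sum_univ_three] at hA hB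
  intro i j
  fin_cases i <;> fin_cases j <;> simp <;> grind

theorem par {R : Type*} [CommRing R] [IsDomain R] (A B r s : Fin 3 → R)
    (hC : ∃ i j, A i * B j - A j * B i ≠ 0)
    (hrA : ∑ c, r c * A c = 0) (hrB : ∑ c, r c * B c = 0)
    (hsA : ∑ c, s c * A c = 0) (hsB : ∑ c, s c * B c = 0) (i j : Fin 3) :
    r i * s j = r j * s i := by
  have hk : ∃ k : Fin 3, A (k + 1) * B (k + 2) - A (k + 2) * B (k + 1) ≠ 0 := by
    by_contra hcon
    push Not at hcon
    have h0 := hcon 0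
    have h1 := hcon 1
    have h2 := hcon 2
    simp at h0 h1 h2
    obtain ⟨i, j, hij⟩ := hC
    apply hij
    fin_cases i <;> fin_cases j <;> simp <;> grind
  obtain ⟨k, hk⟩ := hk
  have h1 := par_aux A B r hrA hrB i k
  have h2 := par_aux A B r hrA hrB j k
  have h3 := par_aux A B s hsA hsB i k
  have h4 := par_aux A B s hsA hsB j k
  generalize A (k + 1) * B (k + 2) - A (k + 2) * B (k + 1) = Ck at *
  generalize A (i + 1) * B (i + 2) - A (i + 2) * B (i + 1) = Ci at *
  generalize A (j + 1) * B (j + 2) - A (j + 2) * B (j + 1) = Cj at *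
  have : Ck * Ck * (r i * s j - r j * s i) = 0 := by
    linear_combination (s j * Ck) * h1 + r k * Ci * h4 - s i * Ck * h2 - r k * Cj * h3
  rcases mul_eq_zero.1 this with h | h
  · exact absurd (mul_self_eq_zero.1 h) hk
  · exact sub_eq_zero.1 h

/-! Specialization along a morphism to two letters -/

/-- The Parikh vector. -/
noncomputable def cnt {n : ℕ} (w : List (Fin n)) : Fin n →₀ ℕ :=
  (w.map (fun c => Finsupp.single c 1)).sum

theorem cnt_apply {n : ℕ} (w : List (Fin n)) (a : Fin n) : cnt w a = w.count a := by
  induction w with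
  | nil => simp [cnt]
  | cons c w ih =>
    have : cnt (c :: w) = Finsupp.single c 1 + cnt w := by simp [cnt]
    rw [this, Finsupp.add_apply, ih, List.count_cons, Finsupp.single_apply]
    by_cases h : c = a <;> simp [h, add_comm]

theorem prod_map_X {n : ℕ} (w : List (Fin n)) :
    (w.map (MvPolynomial.X (R := ℤ))).prod = MvPolynomial.monomial (cnt w) 1 := by
  induction w with
  | nil => simp [cnt]
  | cons c w ih =>
    have : cnt (c :: w) = Finsupp.single c 1 + cnt w := by simp [cnt]
    rw [List.map_cons, List.prod_cons, ih, this, MvPolynomial.X, MvPolynomial.monomial_mul, one_mul]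

/-- Linear map of exponents. -/
noncomputable def Phi (et : Fin 3 → List (Fin 2)) (mu : Fin 3 →₀ ℕ) : Fin 2 →₀ ℕ :=
  ∑ c, mu c • cnt (et c)

theorem Phi_apply (et : Fin 3 → List (Fin 2)) (mu : Fin 3 →₀ ℕ) (a : Fin 2) :
    Phi et mu a = ∑ c, mu c * (et c).count a := by
  simp [Phi, Finsupp.finsetSum_apply, cnt_apply]

theorem Phi_mono (et : Fin 3 → List (Fin 2)) {mu nu : Fin 3 →₀ ℕ} (h : mu ≤ nu) :
    Phi et mu ≤ Phi et nu := by
  intro a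
  rw [Phi_apply, Phi_apply]
  exact Finset.sum_le_sum fun c _ => Nat.mul_le_mul_right _ (h c)

/-- The specialization homomorphism. -/
noncomputable def phi (et : Fin 3 → List (Fin 2)) :
    MvPolynomial (Fin 3) ℤ →+* MvPolynomial (Fin 2) ℤ :=
  MvPolynomial.eval₂Hom MvPolynomial.C (fun c => MvPolynomial.monomial (cnt (et c)) 1)

theorem phi_X (et : Fin 3 → List (Fin 2)) (c : Fin 3) :
    phi et (MvPolynomial.X c) = MvPolynomial.monomial (cnt (et c)) 1 := by
  simp [phi]

theorem phi_monomial (et : Fin 3 → List (Fin 2)) (mu : Fin 3 →₀ ℕ) (r : ℤ) :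
    phi et (MvPolynomial.monomial mu r) = MvPolynomial.monomial (Phi et mu) r := by
  rw [phi, MvPolynomial.coe_eval₂Hom, MvPolynomial.eval₂_monomial, Finsupp.prod_fintype _ _ (by simp)]
  simp only [MvPolynomial.monomial_pow, one_pow]
  rw [← MvPolynomial.monomial_sum_one, MvPolynomial.C_mul_monomial, mul_one, Phi]

theorem coeff_phi (et : Fin 3 → List (Fin 2)) (t : MvPolynomial (Fin 3) ℤ) (nu : Fin 2 →₀ ℕ) :
    MvPolynomial.coeff nu (phi et t)
      = ∑ mu ∈ t.support, if Phi et mu = nu then MvPolynomial.coeff mu t else 0 := by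
  conv_lhs => rw [t.as_sum, map_sum, MvPolynomial.coeff_sum]
  simp only [phi_monomial, MvPolynomial.coeff_monomial]

/-- The Fox row of an equation. -/
noncomputable def row (E : List (Fin 3) × List (Fin 3)) (s : Fin 3) : MvPolynomial (Fin 3) ℤ :=
  fox MvPolynomial.X s E.1 - fox MvPolynomial.X s E.2

/-- Fox derivatives of the images. -/
noncomputable def der (et : Fin 3 → List (Fin 2)) (a : Fin 2) (s : Fin 3) :
    MvPolynomial (Fin 2) ℤ := fox MvPolynomial.X a (et s)

/-- `et` is a solution of `E`. -/
def Solves {β : Type*} (et : Fin 3 → List β) (E : List (Fin 3) × List (Fin 3)) : Prop :=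
  mApply et E.1 = mApply et E.2

theorem fox_mApply (et : Fin 3 → List (Fin 2)) (a : Fin 2) (w : List (Fin 3)) :
    fox MvPolynomial.X a (mApply et w)
      = ∑ s, phi et (fox MvPolynomial.X s w) * der et a s := by
  rw [fox_chain]
  simp only [map_fox, phi_X, prod_map_X, der]

theorem solves_iff (et : Fin 3 → List (Fin 2)) (E : List (Fin 3) × List (Fin 3)) :
    Solves et E ↔ ∀ a, ∑ s, phi et (row E s) * der et a s = 0 := by
  have key : ∀ a, ∑ s, phi et (row E s) * der et a s
      = fox MvPolynomial.X a (mApply et E.1) - fox MvPolynomial.X a (mApply et E.2) := by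
    intro a
    rw [fox_mApply, fox_mApply, ← Finset.sum_sub_distrib]
    exact Finset.sum_congr rfl fun s _ => by rw [row, map_sub, sub_mul]
  constructor
  · intro h a
    rw [key, h, sub_self]
  · intro h
    apply fox_inj MvPolynomial.constantCoeff MvPolynomial.X (by simp) (fun c => MvPolynomial.X_ne_zero c)
    intro a
    have := h a
    rw [key] at this
    exact sub_eq_zero.1 this

theorem Indep.minor {et : Fin 3 → List (Fin 2)} (h : Indep et) :
    ∃ i j, ((et i).count 0 : ℤ) * (et j).count 1 - ((et j).count 0 : ℤ) * (et i).count 1 ≠ 0 := by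
  by_contra hcon
  push Not at hcon
  have h0 : ∀ j, ((et j).count 1 : ℤ) = 0 ∧ -((et j).count 0 : ℤ) = 0 := by
    intro j
    apply h
    intro i
    linarith [hcon i j]
  have := h 1 1 (by intro c; have := h0 c; omega)
  omega

theorem aug_der (et : Fin 3 → List (Fin 2)) (a : Fin 2) (s : Fin 3) :
    MvPolynomial.eval (fun _ => (1 : ℤ)) (der et a s) = ((et s).count a : ℤ) := by
  rw [der, map_fox]
  simp only [MvPolynomial.eval_X]
  exact fox_one a _

theorem Indep.minor_der {et : Fin 3 → List (Fin 2)} (h : Indep et) :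
    ∃ i j, der et 0 i * der et 1 j - der et 0 j * der et 1 i ≠ 0 := by
  obtain ⟨i, j, hij⟩ := h.minor
  refine ⟨i, j, fun h0 => hij ?_⟩
  have := congrArg (MvPolynomial.eval (fun _ => (1 : ℤ))) h0
  simpa only [map_sub, map_mul, aug_der, map_zero] using this

theorem par_rows {et : Fin 3 → List (Fin 2)} (hi : Indep et) (E F : List (Fin 3) × List (Fin 3))
    (hE : Solves et E) (hF : Solves et F) (x y : Fin 3) :
    phi et (row E x * row F y - row E y * row F x) = 0 := by
  rw [solves_iff] at hE hF
  have := par (der et 0) (der et 1) (fun s => phi et (row E s)) (fun s => phi et (row F s))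
    hi.minor_der (hE 0) (hE 1) (hF 0) (hF 1) x y
  rw [map_sub, map_mul, map_mul]
  exact sub_eq_zero.2 this

theorem phi_row_ne {et : Fin 3 → List (Fin 2)} (hne : ∀ c, et c ≠ [])
    (E : List (Fin 3) × List (Fin 3)) (hE : E.1 ≠ E.2) : ∃ i, phi et (row E i) ≠ 0 := by
  by_contra hcon
  push Not at hcon
  apply hE
  apply fox_inj MvPolynomial.constantCoeff
    (fun c => (MvPolynomial.monomial (cnt (et c)) 1 : MvPolynomial (Fin 2) ℤ))
  · intro c
    rw [MvPolynomial.constantCoeff_monomial, if_neg]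
    intro h0
    obtain ⟨a, ha⟩ := List.exists_mem_of_ne_nil _ (hne c)
    have := cnt_apply (et c) a
    rw [h0] at this
    have h2 := List.count_pos_iff.2 ha
    simp at this
    omega
  · intro c
    simp
  · intro s
    have := hcon s
    rw [row, map_sub, sub_eq_zero, map_fox, map_fox] at this
    simpa only [phi_X] using this

theorem transfer {et : Fin 3 → List (Fin 2)} (hne : ∀ c, et c ≠ [])
    (E F : List (Fin 3) × List (Fin 3)) (hE : E.1 ≠ E.2) (hs : Solves et E)
    (h : ∀ x y, phi et (row E x * row F y - row E y * row F x) = 0) : Solves et F := by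
  obtain ⟨i, hi⟩ := phi_row_ne hne E hE
  rw [solves_iff] at hs ⊢
  intro a
  have h1 : phi et (row E i) * ∑ s, phi et (row F s) * der et a s
      = phi et (row F i) * ∑ s, phi et (row E s) * der et a s := by
    rw [Finset.mul_sum, Finset.mul_sum]
    refine Finset.sum_congr rfl fun s _ => ?_
    have := h i s
    rw [map_sub, map_mul, map_mul] at this
    linear_combination (der et a s) * this
  rw [hs a, mul_zero] at h1
  exact (mul_eq_zero.1 h1).resolve_left hi

/-! Kernels -/

/-- The exponent maps have the same kernel. -/
def SameKer (k l : Fin 3 → List (Fin 2)) : Prop :=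
  ∀ mu nu, Phi k mu = Phi k nu ↔ Phi l mu = Phi l nu

theorem ker_iff (k : Fin 3 → List (Fin 2)) (mu nu : Fin 3 →₀ ℕ) :
    Phi k mu = Phi k nu ↔ ∀ a, ∑ c, ((mu c : ℤ) - nu c) * ((k c).count a : ℤ) = 0 := by
  rw [Finsupp.ext_iff]
  refine forall_congr' fun a => ?_
  rw [Phi_apply, Phi_apply]
  simp only [sub_mul, Finset.sum_sub_distrib, sub_eq_zero]
  norm_cast

theorem ker_par {k : Fin 3 → List (Fin 2)} (hk : Indep k) {mu nu mu' nu' : Fin 3 →₀ ℕ}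
    (h : Phi k mu = Phi k nu) (h' : Phi k mu' = Phi k nu') (i j : Fin 3) :
    ((mu i : ℤ) - nu i) * ((mu' j : ℤ) - nu' j) = ((mu j : ℤ) - nu j) * ((mu' i : ℤ) - nu' i) := by
  rw [ker_iff] at h h'
  exact par (fun c => ((k c).count 0 : ℤ)) (fun c => ((k c).count 1 : ℤ))
    (fun c => (mu c : ℤ) - nu c) (fun c => (mu' c : ℤ) - nu' c) hk.minor
    (h 0) (h 1) (h' 0) (h' 1) i j

theorem sameKer_aux {k l : Fin 3 → List (Fin 2)} (hk : Indep k)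
    {mu nu : Fin 3 →₀ ℕ} (hne : mu ≠ nu) (h1 : Phi k mu = Phi k nu) (h2 : Phi l mu = Phi l nu)
    (mu' nu' : Fin 3 →₀ ℕ) (h : Phi k mu' = Phi k nu') : Phi l mu' = Phi l nu' := by
  obtain ⟨i, hi⟩ : ∃ i, mu i ≠ nu i := by
    by_contra hcon
    push Not at hcon
    exact hne (Finsupp.ext hcon)
  have hp := ker_par hk h1 h
  rw [ker_iff] at h2 ⊢
  intro a
  have h3 : ((mu i : ℤ) - nu i) * ∑ c, ((mu' c : ℤ) - nu' c) * ((l c).count a : ℤ)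
      = ((mu' i : ℤ) - nu' i) * ∑ c, ((mu c : ℤ) - nu c) * ((l c).count a : ℤ) := by
    rw [Finset.mul_sum, Finset.mul_sum]
    refine Finset.sum_congr rfl fun c _ => ?_
    linear_combination ((l c).count a : ℤ) * hp i c
  rw [h2 a, mul_zero] at h3
  refine (mul_eq_zero.1 h3).resolve_left ?_
  omega

theorem sameKer_of {k l : Fin 3 → List (Fin 2)} (hk : Indep k) (hl : Indep l)
    {mu nu : Fin 3 →₀ ℕ} (hne : mu ≠ nu) (h1 : Phi k mu = Phi k nu) (h2 : Phi l mu = Phi l nu) :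
    SameKer k l :=
  fun mu' nu' => ⟨sameKer_aux hk hne h1 h2 mu' nu', sameKer_aux hl hne h2 h1 mu' nu'⟩

theorem SameKer.symm {k l : Fin 3 → List (Fin 2)} (h : SameKer k l) : SameKer l k :=
  fun mu nu => (h mu nu).symm

theorem SameKer.phi_eq_zero {k l : Fin 3 → List (Fin 2)} (h : SameKer k l)
    {t : MvPolynomial (Fin 3) ℤ} (ht : phi k t = 0) : phi l t = 0 := by
  ext nu
  rw [coeff_phi, MvPolynomial.coeff_zero]
  by_cases hex : ∃ mu0, Phi l mu0 = nu
  · obtain ⟨mu0, rfl⟩ := hex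
    have := coeff_phi k t (Phi k mu0)
    rw [ht, MvPolynomial.coeff_zero] at this
    refine Eq.trans ?_ this.symm
    refine Finset.sum_congr rfl fun mu _ => ?_
    simp only [h mu mu0]
  · push Not at hex
    exact Finset.sum_eq_zero fun mu _ => if_neg (hex mu)

theorem Phi_single (k : Fin 3 → List (Fin 2)) (x : Fin 3) :
    Phi k (Finsupp.single x 1) = Phi k 0 ↔ k x = [] := by
  have h1 : Phi k (Finsupp.single x 1) = cnt (k x) := by
    ext a
    rw [Phi_apply, cnt_apply]
    simp [Finsupp.single_apply]
  have h2 : Phi k 0 = 0 := by simp [Phi]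
  rw [h1, h2]
  constructor
  · intro h
    rw [List.eq_nil_iff_forall_not_mem]
    intro a ha
    have h3 := cnt_apply (k x) a
    rw [h] at h3
    have := List.count_pos_iff.2 ha
    simp at h3
    omega
  · intro h
    simp [h, cnt]

/-- Two solutions with the same kernel solve the same equations. -/
theorem distinct {k l : Fin 3 → List (Fin 2)} (hk : Indep k) (h : SameKer k l)
    (E F : List (Fin 3) × List (Fin 3)) (hE : E.1 ≠ E.2) (hkE : Solves k E) (hkF : Solves k F)
    (hlE : Solves l E) : Solves l F := by
  by_cases hne : ∀ c, l c ≠ []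
  · exact transfer hne E F hE hlE fun x y => h.phi_eq_zero (par_rows hk E F hkE hkF x y)
  · push Not at hne
    obtain ⟨x, hx⟩ := hne
    have hkx : k x = [] := by
      rw [← Phi_single] at hx ⊢
      exact (h _ _).2 hx
    have hz : ∀ s, s ≠ x → phi k (row F s) = 0 := by
      rw [solves_iff] at hkF
      intro s hs
      obtain ⟨i, j, hij⟩ := hk.minor_der
      have hpa := par_aux (der k 0) (der k 1) (fun s => phi k (row F s)) (hkF 0) (hkF 1)
      have h0 : ∀ a, der k a x = 0 := by intro a; simp [der, hkx, fox]
      have h00 := h0 0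
      have h01 := h0 1
      have hsx := hpa s x
      have hz2 : der k 0 (s + 1) * der k 1 (s + 2) - der k 0 (s + 2) * der k 1 (s + 1) = 0 := by
        fin_cases s <;> fin_cases x <;> simp_all
      rw [hz2, mul_zero] at hsx
      refine (mul_eq_zero.1 hsx).resolve_right ?_
      intro hx0
      apply hij
      fin_cases x <;> fin_cases i <;> fin_cases j <;> simp_all <;> grind
    rw [solves_iff]
    intro a
    refine Finset.sum_eq_zero fun s _ => ?_
    by_cases hs : s = x
    · subst hs
      simp [der, hx, fox]
    · rw [h.phi_eq_zero (hz s hs), zero_mul]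

end WordEq

namespace WordEq

open MvPolynomial

/-! Chains of monomials -/

/-- Nonnegative coefficients and totally ordered support. -/
def IsCh (p : MvPolynomial (Fin 3) ℤ) : Prop :=
  (∀ mu, 0 ≤ MvPolynomial.coeff mu p) ∧
    ∀ mu nu, MvPolynomial.coeff mu p ≠ 0 → MvPolynomial.coeff nu p ≠ 0 → mu ≤ nu ∨ nu ≤ mu

theorem IsCh.X_mul {p : MvPolynomial (Fin 3) ℤ} (hp : IsCh p) (c : Fin 3) :
    IsCh (MvPolynomial.X c * p) := by
  have key : ∀ mu, MvPolynomial.coeff mu (MvPolynomial.X c * p)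
      = if Finsupp.single c 1 ≤ mu then MvPolynomial.coeff (mu - Finsupp.single c 1) p else 0 := by
    intro mu
    rw [MvPolynomial.X, MvPolynomial.coeff_monomial_mul']
    simp
  constructor
  · intro mu
    rw [key]
    split_ifs
    · exact hp.1 _
    · exact le_rfl
  · intro mu nu h1 h2
    rw [key] at h1 h2
    split_ifs at h1 h2 with h3 h4
    · rcases hp.2 _ _ h1 h2 with h | h
      · left
        exact (tsub_le_tsub_iff_right h4).1 h
      · right
        exact (tsub_le_tsub_iff_right h3).1 h
    all_goals simp_all

theorem IsCh.one_add {p : MvPolynomial (Fin 3) ℤ} (hp : IsCh p) : IsCh (1 + p) := by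
  have key : ∀ mu, MvPolynomial.coeff mu (1 + p)
      = (if 0 = mu then 1 else 0) + MvPolynomial.coeff mu p := by
    intro mu
    rw [MvPolynomial.coeff_add, MvPolynomial.coeff_one]
  constructor
  · intro mu
    rw [key]
    have := hp.1 mu
    split_ifs <;> omega
  · intro mu nu h1 h2
    rw [key] at h1 h2
    by_cases h3 : 0 = mu
    · left; subst h3; exact zero_le
    by_cases h4 : 0 = nu
    · right; subst h4; exact zero_le
    rw [if_neg h3, zero_add] at h1
    rw [if_neg h4, zero_add] at h2
    exact hp.2 _ _ h1 h2

theorem isCh_fox (s : Fin 3) (w : List (Fin 3)) : IsCh (fox MvPolynomial.X s w) := by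
  induction w with
  | nil => constructor <;> simp [fox]
  | cons c w ih =>
    rw [fox]
    split_ifs
    · exact (ih.X_mul c).one_add
    · rw [zero_add]; exact ih.X_mul c

theorem chainList (s : Fin 3) (w : List (Fin 3)) {p : MvPolynomial (Fin 3) ℤ} (hp : IsCh p) :
    ∃ L : List (MvPolynomial (Fin 3) ℤ), L.length = w.count s ∧ (∀ q ∈ L, IsCh q) ∧
      L.sum = fox MvPolynomial.X s w * p := by
  induction w with
  | nil => exact ⟨[], by simp, by simp, by simp [fox]⟩
  | cons c w ih =>
    obtain ⟨L, h1, h2, h3⟩ := ih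
    have h4 : ∀ q ∈ L.map (fun q => MvPolynomial.X c * q), IsCh q := by
      intro q hq
      obtain ⟨q', hq', rfl⟩ := List.mem_map.1 hq
      exact (h2 q' hq').X_mul c
    have h5 : (L.map (fun q => MvPolynomial.X c * q)).sum
        = MvPolynomial.X c * (fox MvPolynomial.X s w * p) := by
      rw [List.sum_map_mul_left, List.map_id', h3]
    by_cases hc : c = s
    · refine ⟨p :: L.map (fun q => MvPolynomial.X c * q), ?_, ?_, ?_⟩
      · simp [h1, hc]
      · intro q hq
        rcases List.mem_cons.1 hq with rfl | hq
        · exact hp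
        · exact h4 q hq
      · rw [List.sum_cons, h5, fox, if_pos hc]; ring
    · refine ⟨L.map (fun q => MvPolynomial.X c * q), ?_, h4, ?_⟩
      · simp [h1, hc]
      · rw [h5, fox, if_neg hc]; ring

theorem coeff_sum_nonneg (L : List (MvPolynomial (Fin 3) ℤ)) (hL : ∀ q ∈ L, IsCh q)
    (mu : Fin 3 →₀ ℕ) : 0 ≤ MvPolynomial.coeff mu L.sum := by
  induction L with
  | nil => simp
  | cons p L ih =>
    rw [List.sum_cons, MvPolynomial.coeff_add]
    exact add_nonneg ((hL p (by simp)).1 mu) (ih fun q hq => hL q (by simp [hq]))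

theorem exists_of_coeff_sum (L : List (MvPolynomial (Fin 3) ℤ)) (mu : Fin 3 →₀ ℕ)
    (h : MvPolynomial.coeff mu L.sum ≠ 0) : ∃ q ∈ L, MvPolynomial.coeff mu q ≠ 0 := by
  induction L with
  | nil => simp at h
  | cons p L ih =>
    by_cases hp : MvPolynomial.coeff mu p = 0
    · rw [List.sum_cons, MvPolynomial.coeff_add, hp, zero_add] at h
      obtain ⟨q, hq, hq2⟩ := ih h
      exact ⟨q, by simp [hq], hq2⟩
    · exact ⟨p, by simp, hp⟩

theorem cover (L : List (MvPolynomial (Fin 3) ℤ)) (hL : ∀ q ∈ L, IsCh q)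
    (S : Set (Fin 3 →₀ ℕ)) (hS : ∀ mu ∈ S, ∃ q ∈ L, MvPolynomial.coeff mu q ≠ 0) :
    ∃ P : Finset (Fin 3 →₀ ℕ), P.card ≤ L.length ∧ (∀ p ∈ P, p ∈ S) ∧
      ∀ mu ∈ S, ∃ p ∈ P, p ≤ mu := by
  classical
  induction L generalizing S with
  | nil =>
    refine ⟨∅, by simp, by simp, ?_⟩
    intro mu hmu
    obtain ⟨q, hq, _⟩ := hS mu hmu
    simp at hq
  | cons p L ih =>
    obtain ⟨P, h1, h2, h3⟩ := ih (fun q hq => hL q (by simp [hq]))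
      {mu | mu ∈ S ∧ MvPolynomial.coeff mu p = 0} (by
        rintro mu ⟨hmu, h0⟩
        obtain ⟨q, hq, hq2⟩ := hS mu hmu
        rcases List.mem_cons.1 hq with rfl | hq
        · exact absurd h0 hq2
        · exact ⟨q, hq, hq2⟩)
    by_cases hne : {mu | mu ∈ S ∧ MvPolynomial.coeff mu p ≠ 0}.Nonempty
    · obtain ⟨m, ⟨hmS, hm0⟩, hmin⟩ :=
        (wellFounded_lt (α := Fin 3 →₀ ℕ)).has_min _ hne
      refine ⟨insert m P, ?_, ?_, ?_⟩
      · exact (Finset.card_insert_le _ _).trans (by simpa using h1)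
      · intro q hq
        rcases Finset.mem_insert.1 hq with rfl | hq
        · exact hmS
        · exact (h2 q hq).1
      · intro mu hmu
        by_cases h0 : MvPolynomial.coeff mu p = 0
        · obtain ⟨q, hq, hq2⟩ := h3 mu ⟨hmu, h0⟩
          exact ⟨q, Finset.mem_insert_of_mem hq, hq2⟩
        · refine ⟨m, Finset.mem_insert_self _ _, ?_⟩
          rcases (hL p (by simp)).2 m mu hm0 h0 with h | h
          · exact h
          · rcases eq_or_lt_of_le h with h | h
            · exact h.ge
            · exact absurd h (hmin mu ⟨hmu, h0⟩)
    · refine ⟨P, h1.trans (by simp), fun q hq => (h2 q hq).1, ?_⟩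
      intro mu hmu
      apply h3 mu ⟨hmu, ?_⟩
      by_contra h0
      exact hne ⟨mu, hmu, h0⟩

theorem cover_pos (t : MvPolynomial (Fin 3) ℤ) (pos neg : List (MvPolynomial (Fin 3) ℤ))
    (hp : ∀ q ∈ pos, IsCh q) (hn : ∀ q ∈ neg, IsCh q) (ht : t = pos.sum - neg.sum) :
    ∃ P : Finset (Fin 3 →₀ ℕ), P.card ≤ pos.length ∧
      (∀ p ∈ P, 0 < MvPolynomial.coeff p t) ∧
      ∀ mu, 0 < MvPolynomial.coeff mu t → ∃ p ∈ P, p ≤ mu := by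
  apply cover pos hp {mu | 0 < MvPolynomial.coeff mu t}
  intro mu hmu
  apply exists_of_coeff_sum
  rw [Set.mem_ofPred_eq, ht, MvPolynomial.coeff_sub] at hmu
  have := coeff_sum_nonneg neg hn mu
  omega

theorem pairs (t : MvPolynomial (Fin 3) ℤ) (ht0 : t ≠ 0)
    (pos neg : List (MvPolynomial (Fin 3) ℤ))
    (hp : ∀ q ∈ pos, IsCh q) (hn : ∀ q ∈ neg, IsCh q) (ht : t = pos.sum - neg.sum) :
    ∃ M : Finset ((Fin 3 →₀ ℕ) × (Fin 3 →₀ ℕ)), M.card ≤ pos.length * neg.length ∧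
      (∀ z ∈ M, z.1 ≠ z.2) ∧
      ∀ et, phi et t = 0 → ∃ z ∈ M, Phi et z.1 = Phi et z.2 := by
  obtain ⟨P, hP1, hP2, hP3⟩ := cover_pos t pos neg hp hn ht
  obtain ⟨Q, hQ1, hQ2, hQ3⟩ := cover_pos (-t) neg pos hn hp (by rw [ht]; ring)
  simp only [MvPolynomial.coeff_neg] at hQ2 hQ3
  refine ⟨P ×ˢ Q, ?_, ?_, ?_⟩
  · rw [Finset.card_product]
    exact Nat.mul_le_mul hP1 hQ1
  · intro z hz heq
    rw [Finset.mem_product] at hz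
    have h1 := hP2 _ hz.1
    have h2 := hQ2 _ hz.2
    rw [heq] at h1
    omega
  · intro et het
    have hne : {nu | ∃ mu, MvPolynomial.coeff mu t ≠ 0 ∧ Phi et mu = nu}.Nonempty := by
      obtain ⟨mu, hmu⟩ := MvPolynomial.ne_zero_iff.1 ht0
      exact ⟨_, mu, hmu, rfl⟩
    obtain ⟨nu, ⟨m0, hm0, hnu⟩, hmin⟩ := (wellFounded_lt (α := Fin 2 →₀ ℕ)).has_min _ hne
    have hsum := coeff_phi et t nu
    rw [het, MvPolynomial.coeff_zero] at hsum
    have hmem : m0 ∈ t.support := MvPolynomial.mem_support_iff.2 hm0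
    have low : ∀ p mu, MvPolynomial.coeff p t ≠ 0 → p ≤ mu → Phi et mu = nu → Phi et p = nu := by
      intro p mu hp0 hle hmu
      have h1 := Phi_mono et hle
      rw [hmu] at h1
      rcases eq_or_lt_of_le h1 with h | h
      · exact h
      · exact absurd h (hmin _ ⟨p, hp0, rfl⟩)
    obtain ⟨a, _, ha⟩ := Finset.exists_pos_of_sum_zero_of_exists_nonzero _ hsum.symm
      ⟨m0, hmem, by rw [if_pos hnu]; exact hm0⟩
    have hsum2 : ∑ mu ∈ t.support, -(if Phi et mu = nu then MvPolynomial.coeff mu t else 0) = 0 := by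
      rw [Finset.sum_neg_distrib, ← hsum, neg_zero]
    obtain ⟨b, _, hb⟩ := Finset.exists_pos_of_sum_zero_of_exists_nonzero _ hsum2
      ⟨m0, hmem, by rw [if_pos hnu]; exact neg_ne_zero.2 hm0⟩
    split_ifs at ha hb with h1 h2 h2
    · obtain ⟨p, hpP, hpa⟩ := hP3 a ha
      obtain ⟨q, hqQ, hqb⟩ := hQ3 b hb
      refine ⟨(p, q), Finset.mem_product.2 ⟨hpP, hqQ⟩, ?_⟩
      have e1 := low p a (hP2 p hpP).ne' hpa h1
      have e2 := low q b (by have := hQ2 q hqQ; omega) hqb h2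
      exact e1.trans e2.symm
    all_goals simp at ha hb

/-- The monomial pairs attached to a nonvanishing minor of two rows. -/
theorem minor_pairs (E F : List (Fin 3) × List (Fin 3)) (x y : Fin 3)
    (h : row E x * row F y - row E y * row F x ≠ 0) :
    ∃ M : Finset ((Fin 3 →₀ ℕ) × (Fin 3 →₀ ℕ)),
      M.card ≤ ((E.1 ++ E.2).count x + (E.1 ++ E.2).count y) ^ 2 ∧
      (∀ z ∈ M, z.1 ≠ z.2) ∧
      ∀ et, phi et (row E x * row F y - row E y * row F x) = 0 →
        ∃ z ∈ M, Phi et z.1 = Phi et z.2 := by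
  obtain ⟨L1, a1, b1, c1⟩ := chainList x E.1 (isCh_fox y F.1)
  obtain ⟨L2, a2, b2, c2⟩ := chainList x E.2 (isCh_fox y F.2)
  obtain ⟨L3, a3, b3, c3⟩ := chainList y E.1 (isCh_fox x F.2)
  obtain ⟨L4, a4, b4, c4⟩ := chainList y E.2 (isCh_fox x F.1)
  obtain ⟨K1, d1, e1, f1⟩ := chainList x E.1 (isCh_fox y F.2)
  obtain ⟨K2, d2, e2, f2⟩ := chainList x E.2 (isCh_fox y F.1)
  obtain ⟨K3, d3, e3, f3⟩ := chainList y E.1 (isCh_fox x F.1)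
  obtain ⟨K4, d4, e4, f4⟩ := chainList y E.2 (isCh_fox x F.2)
  obtain ⟨M, hM, hM2⟩ := pairs _ h (L1 ++ L2 ++ L3 ++ L4) (K1 ++ K2 ++ K3 ++ K4)
    (by
      intro q hq
      simp only [List.mem_append] at hq
      rcases hq with ((hq | hq) | hq) | hq
      · exact b1 q hq
      · exact b2 q hq
      · exact b3 q hq
      · exact b4 q hq)
    (by
      intro q hq
      simp only [List.mem_append] at hq
      rcases hq with ((hq | hq) | hq) | hq
      · exact e1 q hq
      · exact e2 q hq
      · exact e3 q hq
      · exact e4 q hq)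
    (by
      simp only [List.sum_append, c1, c2, c3, c4, f1, f2, f3, f4, row]
      ring)
  refine ⟨M, hM.trans (le_of_eq ?_), hM2⟩
  simp only [List.length_append, a1, a2, a3, a4, d1, d2, d3, d4, List.count_append]
  ring

end WordEq

namespace WordEq

/-! The main argument -/

theorem count_mApply (et : Fin 3 → List (Fin 2)) (w : List (Fin 3)) (a : Fin 2) :
    (mApply et w).count a = Phi et (cnt w) a := by
  rw [Phi_apply]
  simp only [cnt_apply]
  induction w with
  | nil => simp [mApply]
  | cons c w ih =>
    rw [mApply_cons, List.count_append, ih]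
    simp [List.count_cons, add_mul, Finset.sum_add_distrib, add_comm]

theorem Solves.Phi_eq {et : Fin 3 → List (Fin 2)} {E : List (Fin 3) × List (Fin 3)}
    (h : Solves et E) : Phi et (cnt E.1) = Phi et (cnt E.2) := by
  ext a
  rw [← count_mApply, ← count_mApply, h]

theorem length_iff {β : Type*} (h : Fin 3 → List β) (E : List (Fin 3) × List (Fin 3)) :
    (mApply h E.1).length = (mApply h E.2).length ↔
      ∑ c, ((cnt E.1 c : ℤ) - cnt E.2 c) * ((h c).length : ℤ) = 0 := by
  rw [length_mApply, length_mApply]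
  simp only [cnt_apply, sub_mul, Finset.sum_sub_distrib, sub_eq_zero]
  norm_cast

theorem exists_letter (E : List (Fin 3) × List (Fin 3)) (hE : E.1 ≠ E.2) :
    ∃ x, 1 ≤ (E.1 ++ E.2).count x := by
  have hne : E.1 ++ E.2 ≠ [] := by
    intro h
    rw [List.append_eq_nil_iff] at h
    exact hE (h.1.trans h.2.symm)
  obtain ⟨x, hx⟩ := List.exists_mem_of_ne_nil _ hne
  exact ⟨x, List.count_pos_iff.2 hx⟩

theorem core {m : ℕ} {β : Type*} (i0 : Fin m) (eqs : Fin m → List (Fin 3) × List (Fin 3))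
    (H : Fin m → Fin 3 → List β)
    (hE : (eqs i0).1 ≠ (eqs i0).2)
    (hS : ∀ k j, (k = i0 ∨ j ≠ k) → Solves (H k) (eqs j))
    (hN : ∀ k, k ≠ i0 → ¬ Solves (H k) (eqs k))
    (et : Fin m → Fin 3 → List (Fin 2)) (th : Fin m → Fin 2 → List β)
    (hf : ∀ k s, H k s = mApply (th k) (et k s)) (hI : ∀ k, Indep (et k))
    (h0 : th i0 0 ++ th i0 1 ≠ th i0 1 ++ th i0 0) :
    ∃ x y : Fin 3, m ≤ (((eqs i0).1 ++ (eqs i0).2).count x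
      + ((eqs i0).1 ++ (eqs i0).2).count y) ^ 2 + 1 := by
  classical
  have small : m ≤ 4 → ∃ x y : Fin 3, m ≤ (((eqs i0).1 ++ (eqs i0).2).count x
      + ((eqs i0).1 ++ (eqs i0).2).count y) ^ 2 + 1 := by
    intro hm4
    obtain ⟨x, hx⟩ := exists_letter _ hE
    refine ⟨x, x, ?_⟩
    nlinarith
  have hS0 : ∀ k, Solves (H k) (eqs i0) := by
    intro k
    apply hS
    by_cases hk : k = i0
    · exact Or.inl hk
    · exact Or.inr (Ne.symm hk)
  have good_solves : ∀ k, th k 0 ++ th k 1 ≠ th k 1 ++ th k 0 → ∀ E, Solves (H k) E →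
      Solves (et k) E := by
    intro k hk E hkE
    apply injective_of_not_commute (th k) hk
    rw [← mApply_comp _ _ _ (hf k), ← mApply_comp _ _ _ (hf k)]
    exact hkE
  have solves_H : ∀ k E, Solves (et k) E → Solves (H k) E := by
    intro k E h
    unfold Solves at h ⊢
    rw [mApply_comp _ _ _ (hf k), mApply_comp _ _ _ (hf k), h]
  have dist : ∀ k l, k ≠ l → l ≠ i0 → th k 0 ++ th k 1 ≠ th k 1 ++ th k 0 →
      th l 0 ++ th l 1 ≠ th l 1 ++ th l 0 → SameKer (et k) (et l) → False := by
    intro k l hkl hl gk gl hsame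
    apply hN l hl
    apply solves_H
    exact distinct (hI k) hsame (eqs i0) (eqs l) hE (good_solves k gk _ (hS0 k))
      (good_solves k gk _ (hS k l (Or.inr hkl.symm))) (good_solves l gl _ (hS0 l))
  by_cases hbad : ∃ k, k ≠ i0 ∧ th k 0 ++ th k 1 = th k 1 ++ th k 0
  · obtain ⟨k, hk, bk⟩ := hbad
    have hlen : ∀ k, k ≠ i0 → th k 0 ++ th k 1 = th k 1 ++ th k 0 →
        ∑ c, ((cnt (eqs k).1 c : ℤ) - cnt (eqs k).2 c) * ((H k c).length : ℤ) ≠ 0 := by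
      intro k hk bk h
      rw [← length_iff] at h
      apply hN k hk
      rw [mApply_comp _ _ _ (hf k), mApply_comp _ _ _ (hf k)] at h
      have := eq_of_length_eq (th k) bk _ _ h
      rw [← mApply_comp _ _ _ (hf k), ← mApply_comp _ _ _ (hf k)] at this
      exact this
    have hcne : ∀ k, k ≠ i0 → th k 0 ++ th k 1 = th k 1 ++ th k 0 →
        cnt (eqs k).1 ≠ cnt (eqs k).2 := by
      intro k hk bk h
      apply hlen k hk bk
      rw [h]
      simp
    have all : ∀ l, l ≠ i0 → l = k := by
      intro l hl
      by_contra hlk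
      have hk0 := (good_solves i0 h0 _ (hS i0 k (Or.inl rfl))).Phi_eq
      have hl0 := (good_solves i0 h0 _ (hS i0 l (Or.inl rfl))).Phi_eq
      by_cases bl : th l 0 ++ th l 1 = th l 1 ++ th l 0
      · have hp := ker_par (hI i0) hk0 hl0
        obtain ⟨j, hj⟩ : ∃ j, cnt (eqs l).1 j ≠ cnt (eqs l).2 j := by
          by_contra hcon
          push Not at hcon
          exact hcne l hl bl (Finsupp.ext hcon)
        have hz := (length_iff (H k) (eqs l)).1 (by rw [hS k l (Or.inr hlk)])
        have h3 : ((cnt (eqs l).1 j : ℤ) - cnt (eqs l).2 j) *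
            ∑ c, ((cnt (eqs k).1 c : ℤ) - cnt (eqs k).2 c) * ((H k c).length : ℤ)
            = ((cnt (eqs k).1 j : ℤ) - cnt (eqs k).2 j) *
            ∑ c, ((cnt (eqs l).1 c : ℤ) - cnt (eqs l).2 c) * ((H k c).length : ℤ) := by
          rw [Finset.mul_sum, Finset.mul_sum]
          refine Finset.sum_congr rfl fun c _ => ?_
          linear_combination ((H k c).length : ℤ) * hp c j
        rw [hz, mul_zero] at h3
        rcases mul_eq_zero.1 h3 with h | h
        · omega
        · exact hlen k hk bk h
      · have hkl := (good_solves l bl _ (hS l k (Or.inr (Ne.symm hlk)))).Phi_eq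
        exact dist i0 l (Ne.symm hl) hl h0 bl
          (sameKer_of (hI i0) (hI l) (hcne k hk bk) hk0 hkl)
    apply small
    have hsub : (Finset.univ : Finset (Fin m)) ⊆ {i0, k} := by
      intro l _
      by_cases hl : l = i0
      · simp [hl]
      · simp [all l hl]
    have hc := (Finset.card_le_card hsub).trans Finset.card_le_two
    rw [Finset.card_univ, Fintype.card_fin] at hc
    omega
  · push Not at hbad
    have good : ∀ k, th k 0 ++ th k 1 ≠ th k 1 ++ th k 0 := by
      intro k
      by_cases hk : k = i0
      · rw [hk]; exact h0
      · exact hbad k hk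
    have hpair : ∀ k l, k ≠ l → ∀ mu nu, mu ≠ nu → Phi (et k) mu = Phi (et k) nu →
        Phi (et l) mu = Phi (et l) nu → False := by
      intro k l hkl mu nu hne hk hl
      have hsame := sameKer_of (hI k) (hI l) hne hk hl
      by_cases hl0 : l = i0
      · exact dist l k hkl.symm (fun h => hkl (h.trans hl0.symm)) (good l) (good k) hsame.symm
      · exact dist k l hkl hl0 (good k) (good l) hsame
    by_cases her : ∀ k, k ≠ i0 → ∃ x, et k x = []
    · apply small
      choose! f hfe using her
      have hc : (Finset.univ.erase i0).card ≤ (Finset.univ : Finset (Fin 3)).card := by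
        apply Finset.card_le_card_of_injOn f (fun _ _ => Finset.mem_coe.2 (Finset.mem_univ _))
        intro k hk l hl hkl
        by_contra hne
        have h1 := hfe k (Finset.ne_of_mem_erase hk)
        have h2 := hfe l (Finset.ne_of_mem_erase hl)
        rw [← hkl] at h2
        rw [← Phi_single] at h1 h2
        exact hpair k l hne _ _ (by simp) h1 h2
      rw [Finset.card_erase_of_mem (Finset.mem_univ _), Finset.card_univ, Finset.card_univ,
        Fintype.card_fin, Fintype.card_fin] at hc
      omega
    · push Not at her
      obtain ⟨p, hp, hpne⟩ := her
      obtain ⟨x, y, hxy⟩ : ∃ x y, row (eqs i0) x * row (eqs p) y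
          - row (eqs i0) y * row (eqs p) x ≠ 0 := by
        by_contra hcon
        push Not at hcon
        apply hN p hp
        apply solves_H
        exact transfer hpne (eqs i0) (eqs p) hE (good_solves p (good p) _ (hS0 p))
          (fun x y => by rw [hcon, map_zero])
      obtain ⟨M, hM1, hM2, hM3⟩ := minor_pairs _ _ x y hxy
      have hex : ∀ k, k ≠ p → ∃ z ∈ M, Phi (et k) z.1 = Phi (et k) z.2 := by
        intro k hk
        apply hM3
        exact par_rows (hI k) _ _ (good_solves k (good k) _ (hS0 k))
          (good_solves k (good k) _ (hS k p (Or.inr hk.symm))) x y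
      choose! g hgM hg using hex
      have hc : (Finset.univ.erase p).card ≤ M.card := by
        apply Finset.card_le_card_of_injOn g
        · intro k hk
          exact hgM k (Finset.ne_of_mem_erase hk)
        · intro k hk l hl hkl
          by_contra hne
          have h1 := hg k (Finset.ne_of_mem_erase hk)
          have h2 := hg l (Finset.ne_of_mem_erase hl)
          have h3 := hM2 _ (hgM k (Finset.ne_of_mem_erase hk))
          rw [← hkl] at h2
          exact hpair k l hne _ _ h3 h1 h2
      rw [Finset.card_erase_of_mem (Finset.mem_univ _), Finset.card_univ,
        Fintype.card_fin] at hc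
      refine ⟨x, y, ?_⟩
      have := hc.trans hM1
      omega

theorem rank_le_one (h : Fin 3 → List ℕ) (et : Fin 3 → List (Fin 2)) (th : Fin 2 → List ℕ)
    (hf : ∀ s, h s = mApply th (et s)) (hc : th 0 ++ th 1 = th 1 ++ th 0) : mRank h ≤ 1 := by
  obtain ⟨r, i, j, h1, h2⟩ := common_root _ _ _ le_rfl hc
  have hr : ∀ c, th c = (List.replicate (![i, j] c) r).flatten := by
    intro c; fin_cases c <;> simp [h1, h2]
  apply Nat.sInf_le
  refine ⟨{r}, by simp, fun s => ?_⟩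
  obtain ⟨N, hN⟩ := mApply_root th r _ hr (et s)
  refine ⟨List.replicate N r, ?_, ?_⟩
  · intro u hu
    rw [List.eq_of_mem_replicate hu]
    simp
  · rw [hf, hN]

end WordEq

/-- If `E₁, …, E_m` is an independent system of word equations on three unknowns having a
nonperiodic common solution, then there are two unknowns `x, y` such that
`m ≤ (|E₁|_x + |E₁|_y)² + 1`. -/
theorem independent_system_bound {m : ℕ}
    (A : Finset ℕ) (hA : ∀ a ∈ A, 0 < a)
    (hm : 0 < m)
    (eqs : Fin m → List (Fin 3) × List (Fin 3))
    (hind : ∀ S : Finset (Fin m), S ≠ Finset.univ →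
      {h : Fin 3 → List ℕ | IntoAlph A h ∧
          ∀ i ∈ S, mApply h (eqs i).1 = mApply h (eqs i).2}
        ≠ {h : Fin 3 → List ℕ | IntoAlph A h ∧
            ∀ i : Fin m, mApply h (eqs i).1 = mApply h (eqs i).2})
    (hsol : ∃ h : Fin 3 → List ℕ, IntoAlph A h ∧
      (∀ i : Fin m, mApply h (eqs i).1 = mApply h (eqs i).2) ∧ 1 < mRank h) :
    ∃ x y : Fin 3,
      m ≤ (((eqs ⟨0, hm⟩).1 ++ (eqs ⟨0, hm⟩).2).count x
            + ((eqs ⟨0, hm⟩).1 ++ (eqs ⟨0, hm⟩).2).count y) ^ 2 + 1 := by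
  classical
  by_cases hm1 : m = 1
  · refine ⟨0, 0, ?_⟩
    omega
  obtain ⟨h0, hA0, hs0, hr0⟩ := hsol
  set i0 : Fin m := ⟨0, hm⟩ with hi0
  have hsep : ∀ k : Fin m, ∃ h : Fin 3 → List ℕ,
      (∀ j, j ≠ k → WordEq.Solves h (eqs j)) ∧ ¬ WordEq.Solves h (eqs k) := by
    intro k
    by_contra hcon
    push Not at hcon
    apply hind (Finset.univ.erase k)
    · intro h
      have := Finset.mem_univ k
      rw [← h] at this
      simp at this
    · ext h
      constructor
      · rintro ⟨h1, h2⟩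
        have h3 : ∀ j, j ≠ k → WordEq.Solves h (eqs j) := fun j hj =>
          h2 j (Finset.mem_erase.2 ⟨hj, Finset.mem_univ _⟩)
        refine ⟨h1, fun i => ?_⟩
        by_cases hik : i = k
        · rw [hik]; exact hcon h h3
        · exact h3 i hik
      · rintro ⟨h1, h2⟩
        exact ⟨h1, fun i _ => h2 i⟩
  have hE : (eqs i0).1 ≠ (eqs i0).2 := by
    intro h
    obtain ⟨g, _, hg⟩ := hsep i0
    apply hg
    unfold WordEq.Solves
    rw [h]
  choose G hG1 hG2 using hsep
  let H : Fin m → Fin 3 → List ℕ := fun k => if k = i0 then h0 else G k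
  have hS : ∀ k j, (k = i0 ∨ j ≠ k) → WordEq.Solves (H k) (eqs j) := by
    intro k j hkj
    by_cases hk : k = i0
    · simp only [H, if_pos hk]
      exact hs0 j
    · simp only [H, if_neg hk]
      exact hG1 k j (hkj.resolve_left hk)
  have hN : ∀ k, k ≠ i0 → ¬ WordEq.Solves (H k) (eqs k) := by
    intro k hk
    simp only [H, if_neg hk]
    exact hG2 k
  have hfac : ∀ k, ∃ (et : Fin 3 → List (Fin 2)) (th : Fin 2 → List ℕ),
      (∀ s, H k s = mApply th (et s)) ∧ WordEq.Indep et := by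
    intro k
    apply WordEq.factorization _ (H k) le_rfl _ _ hE
    apply hS
    by_cases hk : k = i0
    · exact Or.inl hk
    · exact Or.inr (Ne.symm hk)
  choose et th hf hI using hfac
  refine WordEq.core i0 eqs H hE hS hN et th hf hI ?_
  intro hc
  have h1 := WordEq.rank_le_one (H i0) (et i0) (th i0) (hf i0) hc
  have h2 : H i0 = h0 := by simp [H]
  rw [h2] at h1
  omega
end
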